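/- Let μ be a dominant integral weight of 𝔤. Then the dimension of the 𝔤-invariant subspace of adj(𝔤) ⊗ V_μ ⊗ V_{μ̄} (equivalently, of adj(𝔤) ⊗ V_μ ⊗ V_μ*) equals the number of indices j ∈ {1, …, r} such that ⟨μ, α_j∨⟩ > 0. -/

import Mathlib

open scoped TensorProduct Classical
open LieAlgebra LieModule Module

namespace AdjPaper

variable {L : Type} [LieRing L] [LieAlgebra ℂ L]

/-- `χ` is a root of `L` relative to the Cartan subalgebra `H`: a nonzero linear functional
on `H` with nontrivial root space. -/
def IsRoot (H : LieSubalgebra ℂ L) [H.IsCartanSubalgebra] (χ : Module.Dual ℂ H) : Prop :=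
  χ ≠ 0 ∧ rootSpace H ⇑χ ≠ ⊥

/-- `t` is the coroot `χ∨` of the root `χ`: it lies in `⁅𝔤_χ, 𝔤_{-χ}⁆` and satisfies
`χ t = 2`. -/
def IsCoroot (H : LieSubalgebra ℂ L) [H.IsCartanSubalgebra] (χ : Module.Dual ℂ H) (t : H) : Prop :=
  χ t = 2 ∧ ∃ e ∈ rootSpace H ⇑χ, ∃ f ∈ rootSpace H ⇑(-χ), (t : L) = ⁅e, f⁆

/-- `α` enumerates the simple roots of a base of the root system of `(L, H)`. -/
structure IsBase (H : LieSubalgebra ℂ L) [H.IsCartanSubalgebra] {r : ℕ} (α : Fin r → Module.Dual ℂ H) : Prop where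
  isRoot : ∀ j, IsRoot H (α j)
  indep : LinearIndependent ℂ α
  pos_neg : ∀ χ : Module.Dual ℂ H, IsRoot H χ →
    (∃ c : Fin r → ℕ, χ = ∑ j, (c j : ℂ) • α j) ∨ (∃ c : Fin r → ℕ, χ = -∑ j, (c j : ℂ) • α j)

/-- `χ` is a positive root relative to the base `α`. -/
def IsPosRoot (H : LieSubalgebra ℂ L) [H.IsCartanSubalgebra] {r : ℕ} (α : Fin r → Module.Dual ℂ H)
    (χ : Module.Dual ℂ H) : Prop :=
  IsRoot H χ ∧ ∃ c : Fin r → ℕ, χ = ∑ j, (c j : ℂ) • α j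

/-- A weight `μ` is dominant integral: all its pairings `⟨μ, α_j∨⟩ = μ (hc j)` with the
simple coroots `hc j` are non-negative integers. -/
def IsDomInt {H : LieSubalgebra ℂ L} {r : ℕ} (hc : Fin r → H) (μ : Module.Dual ℂ H) : Prop :=
  ∀ j, ∃ n : ℕ, μ (hc j) = (n : ℂ)

/-- `V` is an irreducible `L`-module with highest weight `μ` (relative to the Cartan
subalgebra `H` and the base `α`): it is irreducible and possesses a nonzero vector of
`H`-weight `μ` annihilated by all positive root spaces. -/
def IsHWIrrep (H : LieSubalgebra ℂ L) [H.IsCartanSubalgebra] {r : ℕ} (α : Fin r → Module.Dual ℂ H)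
    (μ : Module.Dual ℂ H) (V : Type) [AddCommGroup V] [Module ℂ V]
    [LieRingModule L V] [LieModule ℂ L V] : Prop :=
  IsSimpleOrder (LieSubmodule ℂ L V) ∧
  ∃ v : V, v ≠ 0 ∧ (∀ x : H, ⁅(x : L), v⁆ = μ x • v) ∧
    ∀ χ : Module.Dual ℂ H, IsPosRoot H α χ → ∀ e ∈ rootSpace H ⇑χ, ⁅e, v⁆ = 0

/-- `W` is isomorphic to the dual representation `V*`: there is a nondegenerate
`𝔤`-invariant pairing `W × V → ℂ`. -/
def IsDualPair (W V : Type) [AddCommGroup W] [Module ℂ W] [LieRingModule L W]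
    [AddCommGroup V] [Module ℂ V] [LieRingModule L V] : Prop :=
  ∃ B : W →ₗ[ℂ] V →ₗ[ℂ] ℂ,
    (∀ w, (∀ v, B w v = 0) → w = 0) ∧ (∀ v, (∀ w, B w v = 0) → v = 0) ∧
    ∀ (x : L) (w : W) (v : V), B ⁅x, w⁆ v + B w ⁅x, v⁆ = 0

/-- `V` is an orthogonal representation: it has a nondegenerate invariant symmetric
bilinear form. -/
def IsOrthogonalRep (V : Type) [AddCommGroup V] [Module ℂ V] [LieRingModule L V] : Prop :=
  ∃ B : V →ₗ[ℂ] V →ₗ[ℂ] ℂ,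
    (∀ v w, B v w = B w v) ∧ (∀ v, (∀ w, B v w = 0) → v = 0) ∧
    ∀ (x : L) (v w : V), B ⁅x, v⁆ w + B v ⁅x, w⁆ = 0

/-- `V` is a symplectic representation: it has a nondegenerate invariant alternating
bilinear form. -/
def IsSymplecticRep (V : Type) [AddCommGroup V] [Module ℂ V] [LieRingModule L V] : Prop :=
  ∃ B : V →ₗ[ℂ] V →ₗ[ℂ] ℂ,
    (∀ v, B v v = 0) ∧ (∀ v, (∀ w, B v w = 0) → v = 0) ∧
    ∀ (x : L) (v w : V), B ⁅x, v⁆ w + B v ⁅x, w⁆ = 0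

variable (L) in
/-- The operator on `adj(𝔤) ⊗ V ⊗ V` exchanging the two copies of `V`. -/
noncomputable def swapMap (V : Type) [AddCommGroup V] [Module ℂ V] :
    (L ⊗[ℂ] (V ⊗[ℂ] V)) →ₗ[ℂ] (L ⊗[ℂ] (V ⊗[ℂ] V)) :=
  LinearMap.lTensor L (TensorProduct.comm ℂ V V).toLinearMap

variable (L) in
/-- The `𝔤`-invariant subspace of `adj(𝔤) ⊗ S²V`, realised inside `adj(𝔤) ⊗ V ⊗ V` as the
invariant vectors fixed by the swap of the two copies of `V`. -/
noncomputable def symSquareInvariants (V : Type) [AddCommGroup V] [Module ℂ V]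
    [LieRingModule L V] [LieModule ℂ L V] : Submodule ℂ (L ⊗[ℂ] (V ⊗[ℂ] V)) :=
  (maxTrivSubmodule ℂ L (L ⊗[ℂ] (V ⊗[ℂ] V)) : Submodule ℂ (L ⊗[ℂ] (V ⊗[ℂ] V))) ⊓
    LinearMap.ker (swapMap L V - LinearMap.id)

variable (L) in
/-- The `𝔤`-invariant subspace of `adj(𝔤) ⊗ Λ²V`, realised inside `adj(𝔤) ⊗ V ⊗ V` as the
invariant vectors anti-fixed by the swap of the two copies of `V`. -/
noncomputable def altSquareInvariants (V : Type) [AddCommGroup V] [Module ℂ V]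
    [LieRingModule L V] [LieModule ℂ L V] : Submodule ℂ (L ⊗[ℂ] (V ⊗[ℂ] V)) :=
  (maxTrivSubmodule ℂ L (L ⊗[ℂ] (V ⊗[ℂ] V)) : Submodule ℂ (L ⊗[ℂ] (V ⊗[ℂ] V))) ⊓
    LinearMap.ker (swapMap L V + LinearMap.id)

end AdjPaper

namespace AdjPaper

section Verma

attribute [local instance] LieRing.ofAssociativeRing

variable {L : Type} [LieRing L] [LieAlgebra ℂ L]

/-- Left-multiplication induction for the tensor algebra. -/
lemma tensorAlgebra_left_induct {A : Type} [AddCommGroup A] [Module ℂ A]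
    (S : Submodule ℂ (TensorAlgebra ℂ A)) (h1 : 1 ∈ S)
    (hS : ∀ f : A, ∀ a ∈ S, TensorAlgebra.ι ℂ f * a ∈ S) (t : TensorAlgebra ℂ A) : t ∈ S := by
  suffices h : ∀ a ∈ S, t * a ∈ S by simpa using h 1 h1
  induction t using TensorAlgebra.induction with
  | algebraMap r =>
    intro a ha
    rw [← Algebra.smul_def]
    exact S.smul_mem r ha
  | ι x => exact hS x
  | mul a b ha hb =>
    intro c hc
    rw [mul_assoc]
    exact ha _ (hb _ hc)
  | add a b ha hb =>
    intro c hc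
    rw [add_mul]
    exact S.add_mem (ha _ hc) (hb _ hc)

open TensorAlgebra in
/-- The step map for the recursive construction of the Verma action. -/
noncomputable def vermaStep (A : LieSubalgebra ℂ L) (p : L →ₗ[ℂ] A) :
    A →ₗ[ℂ] Module.End ℂ (TensorAlgebra ℂ A × (L →ₗ[ℂ] TensorAlgebra ℂ A)) :=
  LinearMap.mk₂ ℂ (fun f s => (ι ℂ f * s.1,
    { toFun := fun x => ι ℂ (p x) * (ι ℂ f * s.1) + ι ℂ f * s.2 (x - p x) + s.2 ⁅x - p x, (f : L)⁆
      map_add' := by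
        intro x y
        simp only [map_add, AddMemClass.coe_add, add_mul, mul_add, map_sub, sub_lie, add_lie,
          mul_sub]
        abel
      map_smul' := by
        intro c x
        simp only [map_smul, SetLike.val_smul, smul_mul_assoc, map_sub, sub_lie, smul_lie,
          RingHom.id_apply, smul_add, mul_sub, smul_sub, mul_smul_comm] }))
    (by
      intro f g s
      ext x
      · simp [add_mul]
      · simp only [map_add, add_mul, mul_add, AddMemClass.coe_add, lie_add,
          LinearMap.coe_mk, AddHom.coe_mk, Prod.snd_add, LinearMap.add_apply]
        abel)
    (by
      intro c f s
      ext x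
      · simp
      · simp only [map_smul, SetLike.val_smul, lie_smul, smul_mul_assoc, mul_smul_comm,
          LinearMap.coe_mk, AddHom.coe_mk, Prod.smul_snd, LinearMap.smul_apply, smul_add])
    (by
      intro f s t
      ext x
      · simp [mul_add]
      · simp only [mul_add, LinearMap.coe_mk, AddHom.coe_mk, Prod.snd_add, Prod.fst_add,
          LinearMap.add_apply]
        abel)
    (by
      intro c f s
      ext x
      · simp
      · simp only [LinearMap.coe_mk, AddHom.coe_mk, Prod.smul_snd, Prod.smul_fst,
          LinearMap.smul_apply, smul_add, mul_smul_comm])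

open TensorAlgebra in
/-- The base point of the recursive construction of the Verma action. -/
noncomputable def vermaBase (A : LieSubalgebra ℂ L) (p : L →ₗ[ℂ] A) (ν : L →ₗ[ℂ] ℂ) :
    TensorAlgebra ℂ A × (L →ₗ[ℂ] TensorAlgebra ℂ A) :=
  (1, (ι ℂ).comp p + (Algebra.linearMap ℂ (TensorAlgebra ℂ A)).comp ν)

lemma vermaStep_snd (A : LieSubalgebra ℂ L) (p : L →ₗ[ℂ] A) (f : A)
    (s : TensorAlgebra ℂ A × (L →ₗ[ℂ] TensorAlgebra ℂ A)) (x : L) :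
    (vermaStep A p f s).2 x = TensorAlgebra.ι ℂ (p x) * (TensorAlgebra.ι ℂ f * s.1) +
      TensorAlgebra.ι ℂ f * s.2 (x - p x) + s.2 ⁅x - p x, (f : L)⁆ := rfl

/-- The Verma action on the tensor algebra (before imposing relations). -/
noncomputable def vermaRho (A : LieSubalgebra ℂ L) (p : L →ₗ[ℂ] A) (ν : L →ₗ[ℂ] ℂ) :
    L →ₗ[ℂ] Module.End ℂ (TensorAlgebra ℂ A) :=
  LinearMap.mk₂ ℂ (fun x a => (TensorAlgebra.lift ℂ (vermaStep A p) a (vermaBase A p ν)).2 x)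
    (by intros; simp) (by intros; simp) (by intros; simp) (by intros; simp)

variable (A : LieSubalgebra ℂ L) (p : L →ₗ[ℂ] A) (ν : L →ₗ[ℂ] ℂ)

lemma verma_fst (a : TensorAlgebra ℂ A) :
    (TensorAlgebra.lift ℂ (vermaStep A p) a (vermaBase A p ν)).1 = a := by
  let S : Submodule ℂ (TensorAlgebra ℂ A) :=
    { carrier := {a | (TensorAlgebra.lift ℂ (vermaStep A p) a (vermaBase A p ν)).1 = a}
      add_mem' := by
        intro a b ha hb
        simp only [Set.mem_ofPred_eq, map_add, LinearMap.add_apply, Prod.fst_add] at *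
        rw [ha, hb]
      zero_mem' := by simp
      smul_mem' := by
        intro c a ha
        simp only [Set.mem_ofPred_eq, map_smul, LinearMap.smul_apply, Prod.smul_fst] at *
        rw [ha] }
  refine tensorAlgebra_left_induct S ?_ ?_ a
  · simp [S, vermaBase]
  · intro f a ha
    simp only [S, Submodule.mem_mk, AddSubmonoid.mem_mk, AddSubsemigroup.mem_mk,
      Set.mem_ofPred_eq, map_mul, TensorAlgebra.lift_ι_apply, Module.End.mul_apply] at *
    change TensorAlgebra.ι ℂ f * _ = _
    rw [ha]

lemma vermaRho_one (x : L) :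
    vermaRho A p ν x 1 = TensorAlgebra.ι ℂ (p x) + algebraMap ℂ _ (ν x) := by
  simp [vermaRho, vermaBase]

lemma vermaRho_ι_mul (x : L) (f : A) (a : TensorAlgebra ℂ A) :
    vermaRho A p ν x (TensorAlgebra.ι ℂ f * a) =
      TensorAlgebra.ι ℂ (p x) * (TensorAlgebra.ι ℂ f * a) +
      TensorAlgebra.ι ℂ f * vermaRho A p ν (x - p x) a + vermaRho A p ν ⁅x - p x, (f : L)⁆ a := by
  have h := verma_fst A p ν a
  simp only [vermaRho, LinearMap.mk₂_apply, map_mul, TensorAlgebra.lift_ι_apply,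
    Module.End.mul_apply]
  rw [vermaStep_snd, h]

lemma vermaRho_A (hp : ∀ a : A, p a = a)
    (hν : ∀ a : A, ν a = 0) (f : A) (a : TensorAlgebra ℂ A) :
    vermaRho A p ν f a = TensorAlgebra.ι ℂ f * a := by
  refine tensorAlgebra_left_induct (LinearMap.eqLocus (vermaRho A p ν f)
    (LinearMap.mulLeft ℂ (TensorAlgebra.ι ℂ f))) ?_ ?_ a
  · simp [vermaRho_one, hp, hν]
  · intro g a _
    simp [LinearMap.mem_eqLocus, vermaRho_ι_mul, hp]

lemma vermaRho_B (x : L) (hx : p x = 0) (f : A) (a : TensorAlgebra ℂ A) :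
    vermaRho A p ν x (TensorAlgebra.ι ℂ f * a) =
      TensorAlgebra.ι ℂ f * vermaRho A p ν x a + vermaRho A p ν ⁅x, (f : L)⁆ a := by
  simp [vermaRho_ι_mul, hx]

lemma p_sub (hp : ∀ a : A, p a = a) (x : L) : p (x - p x) = 0 := by simp [hp]

lemma vermaRho_split (hp : ∀ a : A, p a = a)
    (hν : ∀ a : A, ν a = 0) (x : L) (a : TensorAlgebra ℂ A) :
    vermaRho A p ν x a = TensorAlgebra.ι ℂ (p x) * a + vermaRho A p ν (x - p x) a := by
  rw [← vermaRho_A A p ν hp hν (p x) a, ← LinearMap.add_apply, ← map_add]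
  congr 2
  abel

/-- For `x` in the complement `B` and arbitrary `y`, and an element `a` on which elements of `B`
commute correctly. -/
lemma vermaRho_comm_aux (hp : ∀ a : A, p a = a)
    (hν : ∀ a : A, ν a = 0) (a : TensorAlgebra ℂ A)
    (ha : ∀ x y, p x = 0 → p y = 0 → vermaRho A p ν x (vermaRho A p ν y a) -
      vermaRho A p ν y (vermaRho A p ν x a) = vermaRho A p ν ⁅x, y⁆ a)
    (x y : L) (hx : p x = 0) : vermaRho A p ν x (vermaRho A p ν y a) -
      vermaRho A p ν y (vermaRho A p ν x a) = vermaRho A p ν ⁅x, y⁆ a := by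
  have e := ha x (y - p y) hx (p_sub A p hp y)
  rw [vermaRho_split A p ν hp hν y a, vermaRho_split A p ν hp hν y (vermaRho A p ν x a), map_add,
    vermaRho_B A p ν x hx]
  simp only [lie_sub, map_sub, LinearMap.sub_apply] at e ⊢
  rw [← sub_eq_zero] at e ⊢
  rw [← e]
  abel

lemma vermaRho_comm (hp : ∀ a : A, p a = a)
    (hν : ∀ a : A, ν a = 0)
    (hB : ∀ x y, p x = 0 → p y = 0 → p ⁅x, y⁆ = 0 ∧ ν ⁅x, y⁆ = 0) (a : TensorAlgebra ℂ A) (x y : L) (hx : p x = 0) (hy : p y = 0) :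
    vermaRho A p ν x (vermaRho A p ν y a) -
      vermaRho A p ν y (vermaRho A p ν x a) = vermaRho A p ν ⁅x, y⁆ a := by
  revert x y
  let S : Submodule ℂ (TensorAlgebra ℂ A) :=
    { carrier := {a | ∀ x y, p x = 0 → p y = 0 → vermaRho A p ν x (vermaRho A p ν y a) -
        vermaRho A p ν y (vermaRho A p ν x a) = vermaRho A p ν ⁅x, y⁆ a}
      add_mem' := by
        intro a b ha hb x y hx hy
        simp only [map_add]
        rw [← ha x y hx hy, ← hb x y hx hy]
        abel
      zero_mem' := by intro x y _ _; simp
      smul_mem' := by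
        intro c a ha x y hx hy
        simp only [map_smul]
        rw [← ha x y hx hy, smul_sub] }
  refine tensorAlgebra_left_induct S ?_ ?_ a
  · intro x y hx hy
    simp only [vermaRho_one, hx, hy, (hB x y hx hy).1, (hB x y hx hy).2, map_zero, zero_add,
      Algebra.algebraMap_eq_smul_one, map_smul, smul_smul, mul_comm (ν x), sub_self]
  · intro f a ha x y hx hy
    have h1 := vermaRho_comm_aux A p ν hp hν a ha x ⁅y, (f : L)⁆ hx
    have h2 := vermaRho_comm_aux A p ν hp hν a ha y ⁅x, (f : L)⁆ hy
    have h3 := ha x y hx hy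
    rw [vermaRho_B A p ν x hx, vermaRho_B A p ν y hy, map_add, map_add, vermaRho_B A p ν x hx,
      vermaRho_B A p ν y hy, vermaRho_B A p ν _ (hB x y hx hy).1, ← h3, lie_lie, map_sub,
      LinearMap.sub_apply, ← h1, ← h2, mul_sub]
    abel

/-- The relations. -/
noncomputable def vermaRel (A : LieSubalgebra ℂ L) : Submodule ℂ (TensorAlgebra ℂ A) :=
  Submodule.span ℂ {t | ∃ (a c : TensorAlgebra ℂ A) (f g : A), t = a *
    ((TensorAlgebra.ι ℂ f * TensorAlgebra.ι ℂ g - TensorAlgebra.ι ℂ g * TensorAlgebra.ι ℂ f -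
      TensorAlgebra.ι ℂ ⁅f, g⁆) * c)}

lemma vermaRel_mem (a c : TensorAlgebra ℂ A) (f g : A) : a *
    ((TensorAlgebra.ι ℂ f * TensorAlgebra.ι ℂ g - TensorAlgebra.ι ℂ g * TensorAlgebra.ι ℂ f -
      TensorAlgebra.ι ℂ ⁅f, g⁆) * c) ∈ vermaRel A :=
  Submodule.subset_span ⟨a, c, f, g, rfl⟩

lemma vermaRel_mul (a t : TensorAlgebra ℂ A) (ht : t ∈ vermaRel A) : a * t ∈ vermaRel A := by
  induction ht using Submodule.span_induction with
  | mem x h =>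
    obtain ⟨b, c, f, g, rfl⟩ := h
    rw [← mul_assoc]
    exact vermaRel_mem A _ _ _ _
  | zero => simp
  | add x y _ _ hx hy => rw [mul_add]; exact Submodule.add_mem _ hx hy
  | smul r x _ hx => rw [mul_smul_comm]; exact Submodule.smul_mem _ _ hx

/-- Modulo the relations, the commutator with elements of `A` is correct. -/
lemma vermaRho_A_comm (hp : ∀ a : A, p a = a)
    (hν : ∀ a : A, ν a = 0) (x : L) (f : A) (c : TensorAlgebra ℂ A) :
    vermaRho A p ν x (TensorAlgebra.ι ℂ f * c) - TensorAlgebra.ι ℂ f * vermaRho A p ν x c -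
      vermaRho A p ν ⁅x, (f : L)⁆ c ∈ vermaRel A := by
  have h := vermaRel_mem A 1 c (p x) f
  convert h using 1
  rw [vermaRho_split A p ν hp hν x, vermaRho_split A p ν hp hν x c,
    vermaRho_B A p ν _ (p_sub A p hp x)]
  have e : (⁅(p x : L), (f : L)⁆ : L) = ((⁅p x, f⁆ : A) : L) := rfl
  simp only [sub_lie, map_sub, LinearMap.sub_apply]
  rw [e, vermaRho_A A p ν hp hν ⁅p x, f⁆]
  noncomm_ring

lemma vermaRho_rel (hp : ∀ a : A, p a = a)
    (hν : ∀ a : A, ν a = 0) (x : L) (t : TensorAlgebra ℂ A) (ht : t ∈ vermaRel A) :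
    vermaRho A p ν x t ∈ vermaRel A := by
  induction ht using Submodule.span_induction with
  | zero => simp
  | add x y _ _ hx hy => rw [map_add]; exact Submodule.add_mem _ hx hy
  | smul r x _ hx => rw [map_smul]; exact Submodule.smul_mem _ _ hx
  | mem t h =>
    obtain ⟨a, c, f, g, rfl⟩ := h
    revert x
    let r := (TensorAlgebra.ι ℂ f * TensorAlgebra.ι ℂ g -
      TensorAlgebra.ι ℂ g * TensorAlgebra.ι ℂ f - TensorAlgebra.ι ℂ ⁅f, g⁆) * c
    let S : Submodule ℂ (TensorAlgebra ℂ A) :=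
      { carrier := {a | ∀ x, vermaRho A p ν x (a * r) ∈ vermaRel A}
        add_mem' := by
          intro a b ha hb x
          rw [add_mul, map_add]
          exact Submodule.add_mem _ (ha x) (hb x)
        zero_mem' := by intro x; simp
        smul_mem' := by
          intro k a ha x
          rw [smul_mul_assoc, map_smul]
          exact Submodule.smul_mem _ _ (ha x) }
    refine tensorAlgebra_left_induct S ?_ ?_ a
    · intro x
      have h1 := vermaRho_A_comm A p ν hp hν x f (TensorAlgebra.ι ℂ g * c)
      have h2 := vermaRho_A_comm A p ν hp hν x g (TensorAlgebra.ι ℂ f * c)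
      have h3 := vermaRho_A_comm A p ν hp hν x ⁅f, g⁆ c
      have h4 := vermaRel_mul A (TensorAlgebra.ι ℂ f) _ (vermaRho_A_comm A p ν hp hν x g c)
      have h5 := vermaRel_mul A (TensorAlgebra.ι ℂ g) _ (vermaRho_A_comm A p ν hp hν x f c)
      have h6 := vermaRho_A_comm A p ν hp hν ⁅x, (f : L)⁆ g c
      have h7 := vermaRho_A_comm A p ν hp hν ⁅x, (g : L)⁆ f c
      have h8 := vermaRel_mem A 1 (vermaRho A p ν x c) f g
      have key := Submodule.add_mem _ (Submodule.add_mem _ (Submodule.sub_mem _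
        (Submodule.add_mem _ (Submodule.sub_mem _ (Submodule.sub_mem _ h1 h2) h3) h4) h5)
        (Submodule.sub_mem _ h6 h7)) h8
      convert key using 1
      have e : (((⁅f, g⁆ : A) : L)) = ⁅(f : L), (g : L)⁆ := rfl
      have j : ⁅x, ⁅(f : L), (g : L)⁆⁆ = ⁅⁅x, (f : L)⁆, (g : L)⁆ - ⁅⁅x, (g : L)⁆, (f : L)⁆ := by
        rw [leibniz_lie, ← lie_skew (f : L)]
        abel
      rw [e, j, map_sub, LinearMap.sub_apply]
      simp only [r, one_mul, sub_mul, map_sub, mul_sub, mul_assoc]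
      abel
    · intro k a ha x
      have h1 := vermaRho_A_comm A p ν hp hν x k (a * r)
      have h2 := vermaRel_mul A (TensorAlgebra.ι ℂ k) _ (ha x)
      have h3 := ha ⁅x, (k : L)⁆
      have key := Submodule.add_mem _ (Submodule.add_mem _ h1 h2) h3
      rw [mul_assoc]
      convert key using 1
      abel

/-- Existence of Verma-type modules, free over the complement `A` of `B = ker p`. -/
theorem exists_verma (hp : ∀ a : A, p a = a)
    (hν : ∀ a : A, ν a = 0)
    (hB : ∀ x y, p x = 0 → p y = 0 → p ⁅x, y⁆ = 0 ∧ ν ⁅x, y⁆ = 0) : ∃ (M : Type) (_ : AddCommGroup M) (_ : Module ℂ M)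
    (_ : LieRingModule L M) (_ : LieModule ℂ L M) (v : M),
    (∀ x, p x = 0 → ⁅x, v⁆ = ν x • v) ∧
    (∀ P : Submodule ℂ M, v ∈ P → (∀ a : A, ∀ m ∈ P, ⁅(a : L), m⁆ ∈ P) → P = ⊤) ∧
    ∀ (Z : Type) [AddCommGroup Z] [Module ℂ Z] [LieRingModule L Z] [LieModule ℂ L Z] (z : Z),
      ∃ ψ : M →ₗ[ℂ] Z, ψ v = z ∧ ∀ (a : A) (m : M), ψ ⁅(a : L), m⁆ = ⁅(a : L), ψ m⁆ := by
  let J := vermaRel A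
  let R : L →ₗ[ℂ] Module.End ℂ (TensorAlgebra ℂ A ⧸ J) :=
    LinearMap.mk₂ ℂ (fun x => J.mapQ J (vermaRho A p ν x) (vermaRho_rel A p ν hp hν x))
      (by intro x y m; obtain ⟨m, rfl⟩ := J.mkQ_surjective m; simp)
      (by intro x y m; obtain ⟨m, rfl⟩ := J.mkQ_surjective m; simp)
      (by intros; simp) (by intros; simp)
  have hR : ∀ x t, R x (J.mkQ t) = J.mkQ (vermaRho A p ν x t) := by
    intro x t; simp [R]
  have hRA : ∀ (x : L) (f : A) m, R x (R f m) - R f (R x m) = R ⁅x, (f : L)⁆ m := by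
    intro x f m
    obtain ⟨m, rfl⟩ := J.mkQ_surjective m
    simp only [hR]
    rw [← sub_eq_zero, ← map_sub, ← map_sub, Submodule.mkQ_apply, Submodule.Quotient.mk_eq_zero]
    have := vermaRho_A_comm A p ν hp hν x f m
    rwa [vermaRho_A A p ν hp hν, vermaRho_A A p ν hp hν]
  have hRR : ∀ (x y : L) m, R x (R y m) - R y (R x m) = R ⁅x, y⁆ m := by
    have hBB : ∀ (x y : L) (_ : p x = 0) (_ : p y = 0) m,
        R x (R y m) - R y (R x m) = R ⁅x, y⁆ m := by
      intro x y hx hy m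
      obtain ⟨m, rfl⟩ := J.mkQ_surjective m
      simp only [hR]
      rw [← map_sub, vermaRho_comm A p ν hp hν hB m x y hx hy]
    have hB' : ∀ (x y : L) (_ : p x = 0) m, R x (R y m) - R y (R x m) = R ⁅x, y⁆ m := by
      intro x y hx m
      have h1 := hRA x (p y) m
      have h2 := hBB x (y - p y) hx (p_sub A p hp y) m
      have h3 : R x (R y m) - R y (R x m) = (R x (R (y - p y) m) - R (y - p y) (R x m)) +
          (R x (R (p y) m) - R (p y) (R x m)) := by
        simp only [map_sub, LinearMap.sub_apply]
        abel
      rw [h3, h2, h1, lie_sub, map_sub, LinearMap.sub_apply]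
      abel
    intro x y m
    have h1 := hRA y (p x) m
    have h2 := hB' (x - p x) y (p_sub A p hp x) m
    have h3 : R x (R y m) - R y (R x m) = (R (x - p x) (R y m) - R y (R (x - p x) m)) -
        (R y (R (p x) m) - R (p x) (R y m)) := by
      simp only [map_sub, LinearMap.sub_apply]
      abel
    rw [h3, h1, h2, sub_lie, ← lie_skew y, map_sub, LinearMap.sub_apply, map_neg,
      LinearMap.neg_apply]
    abel
  let ρ : L →ₗ⁅ℂ⁆ Module.End ℂ (TensorAlgebra ℂ A ⧸ J) :=
    { R with
      map_lie' := by
        intro x y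
        refine LinearMap.ext fun m => ?_
        simp only [AddHom.toFun_eq_coe, LinearMap.coe_toAddHom]
        rw [LieRing.of_associative_ring_bracket]
        exact (hRR x y m).symm }
  let i1 : LieRingModule L (TensorAlgebra ℂ A ⧸ J) := LieRingModule.compLieHom _ ρ
  let i2 : LieModule ℂ L (TensorAlgebra ℂ A ⧸ J) := LieModule.compLieHom _ ρ
  have hbr : ∀ (x : L) (m : TensorAlgebra ℂ A ⧸ J), ⁅x, m⁆ = R x m := fun x m => rfl
  refine ⟨TensorAlgebra ℂ A ⧸ J, inferInstance, inferInstance, i1, i2, J.mkQ 1, ?_, ?_, ?_⟩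
  · intro x hx
    rw [hbr, hR, vermaRho_one, hx, ← map_smul, map_zero, zero_add, Algebra.algebraMap_eq_smul_one]
  · intro P h1 hP
    rw [Submodule.eq_top_iff']
    intro m
    obtain ⟨m, rfl⟩ := J.mkQ_surjective m
    refine tensorAlgebra_left_induct (P.comap J.mkQ) h1 ?_ m
    intro f a ha
    have := hP f _ ha
    rwa [hbr, hR, vermaRho_A A p ν hp hν] at this
  · intro Z _ _ _ _ z
    let φ := TensorAlgebra.lift ℂ ((toEnd ℂ L Z : L →ₗ[ℂ] Module.End ℂ Z).comp
      (A.incl : A →ₗ[ℂ] L))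
    have hφ : ∀ (f : A) t, φ (TensorAlgebra.ι ℂ f * t) z = ⁅(f : L), φ t z⁆ := by
      intro f t
      simp [φ]
    refine ⟨J.liftQ (LinearMap.applyₗ z ∘ₗ φ.toLinearMap) ?_, ?_, ?_⟩
    · refine Submodule.span_le.2 ?_
      rintro _ ⟨a, c, f, g, rfl⟩
      simp only [SetLike.mem_coe, LinearMap.mem_ker, LinearMap.comp_apply,
        AlgHom.toLinearMap_apply, LinearMap.applyₗ_apply_apply, map_mul, Module.End.mul_apply]
      convert map_zero (φ a)
      have e : ∀ f : A, φ (TensorAlgebra.ι ℂ f) = toEnd ℂ L Z (f : L) := by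
        intro f; simp [φ]
      simp [e]
    · change φ 1 z = z
      simp
    · intro a m
      obtain ⟨m, rfl⟩ := J.mkQ_surjective m
      rw [hbr, hR, vermaRho_A A p ν hp hν]
      exact hφ a m

end Verma

end AdjPaper
namespace AdjPaper

section Weights

variable {L : Type} [LieRing L] [LieAlgebra ℂ L] (H : LieSubalgebra ℂ L)
  (X : Type) [AddCommGroup X] [Module ℂ X] [LieRingModule L X] [LieModule ℂ L X]

/-- The weight space of weight `ν`. -/
def wt (ν : Module.Dual ℂ H) : Submodule ℂ X where
  carrier := {x | ∀ h : H, ⁅(h : L), x⁆ = ν h • x}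
  add_mem' := by
    intro a b ha hb h
    rw [lie_add, ha h, hb h, smul_add]
  zero_mem' := by intro h; simp
  smul_mem' := by
    intro c a ha h
    rw [lie_smul, ha h, smul_comm]

variable {H X}

lemma mem_wt {ν : Module.Dual ℂ H} {x : X} :
    x ∈ wt H X ν ↔ ∀ h : H, ⁅(h : L), x⁆ = ν h • x := Iff.rfl

lemma wt_lie {χ ν : Module.Dual ℂ H} {e : L} {x : X} (he : e ∈ wt H L χ) (hx : x ∈ wt H X ν) :
    ⁅e, x⁆ ∈ wt H X (χ + ν) := by
  intro h
  rw [leibniz_lie, he h, hx h, smul_lie, lie_smul, LinearMap.add_apply, add_smul]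

lemma wt_unique {ν ν' : Module.Dual ℂ H} {x : X} (hx : x ∈ wt H X ν) (hx' : x ∈ wt H X ν')
    (h0 : x ≠ 0) : ν = ν' := by
  ext h
  have : ν h • x = ν' h • x := by rw [← hx h, ← hx' h]
  exact smul_left_injective ℂ h0 this

lemma iSup_wt_stable (T : Set (Module.Dual ℂ H)) (h : H) (x : X) (hx : x ∈ ⨆ ν ∈ T, wt H X ν) :
    ⁅(h : L), x⁆ ∈ ⨆ ν ∈ T, wt H X ν := by
  suffices hle : (⨆ ν ∈ T, wt H X ν) ≤
      Submodule.comap (toEnd ℂ L X (h : L)) (⨆ ν ∈ T, wt H X ν) from hle hx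
  refine iSup₂_le fun ν hν y hy => ?_
  have : ⁅(h : L), y⁆ = ν h • y := hy h
  rw [Submodule.mem_comap, toEnd_apply_apply, this]
  exact Submodule.smul_mem _ _ (le_iSup₂ (f := fun ν (_ : ν ∈ T) => wt H X ν) ν hν hy)

/-- A nonzero element of an `H`-stable submodule that is a sum of weight vectors yields a weight
vector in the submodule. -/
lemma grade (K : Submodule ℂ X) (hK : ∀ (h : H), ∀ x ∈ K, ⁅(h : L), x⁆ ∈ K)
    (S : Set (Module.Dual ℂ H)) (x : X) (hx : x ∈ K) (hxS : x ∈ ⨆ ν ∈ S, wt H X ν)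
    (h0 : x ≠ 0) : ∃ ν ∈ S, ∃ y ∈ K, y ≠ 0 ∧ y ∈ wt H X ν := by
  have key : ∀ T : Finset (Module.Dual ℂ H), ∀ x ∈ K, x ∈ (⨆ ν ∈ (T : Set _), wt H X ν) → x ≠ 0 →
      ∃ ν ∈ T, ∃ y ∈ K, y ≠ 0 ∧ y ∈ wt H X ν := by
    intro T
    induction T using Finset.induction_on with
    | empty =>
      intro x _ hx h0
      simp at hx
      exact absurd hx h0
    | insert ν0 T _ ih =>
      intro x hxK hx h0
      by_cases hw : x ∈ wt H X ν0
      · exact ⟨ν0, by simp, x, hxK, h0, hw⟩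
      · rw [mem_wt, not_forall] at hw
        obtain ⟨h, hh⟩ := hw
        have hx' := hx
        rw [Finset.coe_insert, iSup_insert, Submodule.mem_sup] at hx'
        obtain ⟨a, ha, b, hb, hab⟩ := hx'
        have e : ⁅(h : L), x⁆ - ν0 h • x = ⁅(h : L), b⁆ - ν0 h • b := by
          rw [← hab, lie_add, ha h, smul_add]
          abel
        obtain ⟨ν, hν, y, h1, h2, h3⟩ := ih (⁅(h : L), x⁆ - ν0 h • x)
          (K.sub_mem (hK h x hxK) (K.smul_mem _ hxK))
          (by rw [e]; exact Submodule.sub_mem _ (iSup_wt_stable _ h b hb)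
                (Submodule.smul_mem _ _ hb)) (by rwa [ne_eq, sub_eq_zero])
        exact ⟨ν, Finset.mem_insert_of_mem hν, y, h1, h2, h3⟩
  rw [iSup_subtype'] at hxS
  rw [Submodule.mem_iSup_iff_exists_finset] at hxS
  obtain ⟨T, hT⟩ := hxS
  obtain ⟨ν, hν, y, hy⟩ := key (T.image Subtype.val) x hx (by
    have hle : (⨆ i ∈ T, wt H X (i : Module.Dual ℂ H)) ≤
        ⨆ ν ∈ ((T.image Subtype.val : Finset _) : Set (Module.Dual ℂ H)), wt H X ν := by
      refine iSup₂_le fun ν hν => ?_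
      exact le_iSup₂ (f := fun ν (_ : ν ∈ ((T.image Subtype.val : Finset _) : Set _)) => wt H X ν)
        (ν : Module.Dual ℂ H) (by simpa using hν)
    exact hle hT) h0
  refine ⟨ν, ?_, y, hy⟩
  simp only [Finset.mem_image] at hν
  obtain ⟨a, _, rfl⟩ := hν
  exact a.2

end Weights

section Roots

variable {L : Type} [LieRing L] [LieAlgebra ℂ L]
  {H : LieSubalgebra ℂ L} [H.IsCartanSubalgebra] {r : ℕ} {α : Fin r → Module.Dual ℂ H}

lemma mem_rootSpace_of_wt {χ : Module.Dual ℂ H} {e : L} (he : e ∈ wt H L χ) :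
    e ∈ rootSpace H χ :=
  weightSpace_le_genWeightSpace L (χ : H → ℂ) ((mem_weightSpace _ _).2 he)

variable [FiniteDimensional ℂ L] [LieAlgebra.IsSemisimple ℂ L]

lemma mem_rootSpace_iff {χ : Module.Dual ℂ H} {e : L} : e ∈ rootSpace H χ ↔ e ∈ wt H L χ :=
  ⟨fun he h => by simpa using LieAlgebra.IsKilling.lie_eq_smul_of_mem_rootSpace he h,
    mem_rootSpace_of_wt⟩

lemma mem_wt_zero {e : L} : e ∈ wt H L 0 ↔ e ∈ H := by
  rw [← mem_rootSpace_iff]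
  change e ∈ rootSpace H (0 : H → ℂ) ↔ _
  rw [rootSpace_zero_eq]
  simp

lemma root_induct (hb : IsBase H α) (S : Submodule ℂ L) (hH : ∀ h : H, (h : L) ∈ S)
    (hp : ∀ χ, IsPosRoot H α χ → ∀ e ∈ wt H L χ, e ∈ S)
    (hn : ∀ χ, IsPosRoot H α χ → ∀ e ∈ wt H L (-χ), e ∈ S) (x : L) : x ∈ S := by
  have h := iSup_genWeightSpace_eq_top' ℂ H L
  have h2 : (⨆ χ : Weight ℂ H L, (genWeightSpace L χ).toSubmodule) = ⊤ := by
    rw [← LieSubmodule.iSup_toSubmodule, h]; rfl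
  have h3 : (⨆ χ : Weight ℂ H L, (genWeightSpace L χ).toSubmodule) ≤ S := by
    refine iSup_le fun χ e he => ?_
    have he' : e ∈ rootSpace H (Weight.toLinear ℂ H L χ) := he
    by_cases hz : Weight.toLinear ℂ H L χ = 0
    · rw [hz, mem_rootSpace_iff, mem_wt_zero] at he'
      exact hH ⟨e, he'⟩
    · have hr : IsRoot H (Weight.toLinear ℂ H L χ) := ⟨hz, χ.2⟩
      rcases hb.pos_neg _ hr with ⟨c, hc⟩ | ⟨c, hc⟩
      · exact hp _ ⟨hr, c, hc⟩ e (mem_rootSpace_iff.1 he')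
      · refine hn (-Weight.toLinear ℂ H L χ) ⟨⟨by simpa using hz, ?_⟩, c, by rw [hc, neg_neg]⟩ e
          (by rw [neg_neg]; exact mem_rootSpace_iff.1 he')
        exact (-χ).2
  rw [h2] at h3
  exact h3 trivial

lemma IsRoot.neg {χ : Module.Dual ℂ H} (h : IsRoot H χ) : IsRoot H (-χ) :=
  ⟨by simpa using h.1, (-(⟨χ, h.2⟩ : Weight ℂ H L)).2⟩

lemma IsBase.neg (hb : IsBase H α) : IsBase H (-α) where
  isRoot j := (hb.isRoot j).neg
  indep := by
    have := hb.indep.units_smul (fun _ => (-1 : ℂˣ))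
    convert this using 1
    ext j; simp
  pos_neg χ hχ := by
    rcases hb.pos_neg χ hχ with ⟨c, hc⟩ | ⟨c, hc⟩
    · right; exact ⟨c, by simp [hc]⟩
    · left; exact ⟨c, by simp [hc]⟩

lemma isPosRoot_neg {χ : Module.Dual ℂ H} : IsPosRoot H (-α) χ ↔ IsPosRoot H α (-χ) := by
  constructor
  · rintro ⟨h, c, hc⟩
    exact ⟨h.neg, c, by simp [hc]⟩
  · rintro ⟨h, c, hc⟩
    refine ⟨by simpa using h.neg, c, ?_⟩
    rw [← neg_neg χ, hc]; simp

lemma IsCoroot.neg {χ : Module.Dual ℂ H} {t : H} (h : IsCoroot H χ t) : IsCoroot H (-χ) (-t) := by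
  obtain ⟨h1, e, he, f, hf, h2⟩ := h
  refine ⟨by simpa using h1, f, hf, e, by rwa [neg_neg], ?_⟩
  rw [← lie_skew, ← h2]; simp

end Roots

end AdjPaper
namespace AdjPaper

section HW

variable {L : Type} [LieRing L] [LieAlgebra ℂ L]
  {H : LieSubalgebra ℂ L} [H.IsCartanSubalgebra] {r : ℕ}
  {X : Type} [AddCommGroup X] [Module ℂ X] [LieRingModule L X] [LieModule ℂ L X]

/-- Singular vectors of weight `μ`. -/
def Sing (α : Fin r → Module.Dual ℂ H) (μ : Module.Dual ℂ H) (v : X) : Prop :=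
  v ∈ wt H X μ ∧ ∀ χ, IsPosRoot H α χ → ∀ e ∈ wt H L χ, ⁅e, v⁆ = 0

variable (L) in
/-- The vector `v` generates the module. -/
def Gen (v : X) : Prop := ∀ P : LieSubmodule ℂ L X, v ∈ P → P = ⊤

/-- A nonnegative integral combination of simple roots. -/
noncomputable def qs (α : Fin r → Module.Dual ℂ H) (c : Fin r → ℕ) : Module.Dual ℂ H :=
  ∑ j, (c j : ℂ) • α j

lemma qs_add (α : Fin r → Module.Dual ℂ H) (c d : Fin r → ℕ) : qs α (c + d) = qs α c + qs α d := by
  simp [qs, add_smul, Finset.sum_add_distrib]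

lemma qs_zero (α : Fin r → Module.Dual ℂ H) : qs α 0 = 0 := by simp [qs]

lemma qs_single (α : Fin r → Module.Dual ℂ H) (j : Fin r) (n : ℕ) :
    qs α (Pi.single j n) = (n : ℂ) • α j := by
  rw [qs, Finset.sum_eq_single j]
  · simp
  · intro b _ hb; simp [hb]
  · simp

variable {α : Fin r → Module.Dual ℂ H}

lemma qs_inj (hb : IsBase H α) {c d : Fin r → ℕ} (h : qs α c = qs α d) : c = d := by
  have h1 : ∑ j, ((c j : ℂ) - (d j : ℂ)) • α j = 0 := by
    simp only [sub_smul, Finset.sum_sub_distrib]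
    exact sub_eq_zero.2 h
  have h2 := Fintype.linearIndependent_iff.1 hb.indep _ h1
  ext j
  have := sub_eq_zero.1 (h2 j)
  exact_mod_cast this

lemma IsPosRoot.exists_qs {χ : Module.Dual ℂ H} (h : IsPosRoot H α χ) :
    ∃ c, c ≠ 0 ∧ χ = qs α c := by
  obtain ⟨h1, c, hc⟩ := h
  refine ⟨c, ?_, hc⟩
  rintro rfl
  exact h1.1 (by rw [hc]; simp)

/-- Weights below `μ`. -/
def low (α : Fin r → Module.Dual ℂ H) (μ : Module.Dual ℂ H) : Set (Module.Dual ℂ H) :=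
  {ν | ∃ c : Fin r → ℕ, ν = μ - qs α c}

/-- Weights strictly below `μ`. -/
def low' (α : Fin r → Module.Dual ℂ H) (μ : Module.Dual ℂ H) : Set (Module.Dual ℂ H) :=
  {ν | ∃ c : Fin r → ℕ, c ≠ 0 ∧ ν = μ - qs α c}

lemma le_iSup_wt {S : Set (Module.Dual ℂ H)} {ν : Module.Dual ℂ H} (hν : ν ∈ S) {x : X}
    (hx : x ∈ wt H X ν) : x ∈ ⨆ ν ∈ S, wt H X ν :=
  le_iSup₂ (f := fun ν (_ : ν ∈ S) => wt H X ν) ν hν hx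

lemma lower_low {μ χ : Module.Dual ℂ H} (hχ : IsPosRoot H α χ) {f : L} (hf : f ∈ wt H L (-χ))
    (x : X) (hx : x ∈ ⨆ ν ∈ low α μ, wt H X ν) : ⁅f, x⁆ ∈ ⨆ ν ∈ low' α μ, wt H X ν := by
  suffices hle : (⨆ ν ∈ low α μ, wt H X ν) ≤
      Submodule.comap (toEnd ℂ L X f) (⨆ ν ∈ low' α μ, wt H X ν) from hle hx
  obtain ⟨d, hd0, hd⟩ := hχ.exists_qs
  refine iSup₂_le fun ν hν y hy => ?_
  obtain ⟨c, rfl⟩ := hν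
  refine le_iSup_wt (S := low' α μ) (ν := -χ + (μ - qs α c)) ⟨c + d, ?_, ?_⟩ (wt_lie hf hy)
  · intro h0
    apply hd0
    ext j
    have := congrFun h0 j
    simp at this ⊢
    exact this.2
  · rw [qs_add, hd]; abel

lemma low'_le {μ : Module.Dual ℂ H} :
    (⨆ ν ∈ low' α μ, wt H X ν) ≤ ⨆ ν ∈ low α μ, wt H X ν := by
  refine iSup₂_le fun ν hν y hy => ?_
  obtain ⟨c, _, rfl⟩ := hν
  exact le_iSup_wt (S := low α μ) ⟨c, rfl⟩ hy

variable [FiniteDimensional ℂ L] [LieAlgebra.IsSemisimple ℂ L]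

/-- A highest weight module is spanned by `n⁻` acting on `v`. -/
lemma neg_span (hb : IsBase H α) {μ : Module.Dual ℂ H} {v : X} (hv : Sing α μ v) (hg : Gen L v)
    (P : Submodule ℂ X) (hvP : v ∈ P)
    (hP : ∀ χ, IsPosRoot H α χ → ∀ f ∈ wt H L (-χ), ∀ x ∈ P, ⁅f, x⁆ ∈ P) : P = ⊤ := by
  let F : Set (Submodule ℂ X) :=
    {P | v ∈ P ∧ ∀ χ, IsPosRoot H α χ → ∀ f ∈ wt H L (-χ), ∀ x ∈ P, ⁅f, x⁆ ∈ P}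
  let P0 : Submodule ℂ X := sInf F
  have hmin : ∀ Q ∈ F, P0 ≤ Q := fun Q hQ => sInf_le hQ
  have hP0 : P0 ∈ F := by
    refine ⟨?_, ?_⟩
    · rw [Submodule.mem_sInf]
      exact fun Q hQ => hQ.1
    · intro χ hχ f hf x hx
      rw [Submodule.mem_sInf] at hx ⊢
      exact fun Q hQ => hQ.2 χ hχ f hf x (hx Q hQ)
  let S : Submodule ℂ X :=
    { carrier := {y | y ∈ P0 ∧ ∀ x : L, ⁅x, y⁆ ∈ P0}
      add_mem' := by
        rintro a b ⟨ha, ha'⟩ ⟨hb, hb'⟩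
        exact ⟨P0.add_mem ha hb, fun x => by rw [lie_add]; exact P0.add_mem (ha' x) (hb' x)⟩
      zero_mem' := ⟨P0.zero_mem, fun x => by rw [lie_zero]; exact P0.zero_mem⟩
      smul_mem' := by
        rintro c a ⟨ha, ha'⟩
        exact ⟨P0.smul_mem c ha, fun x => by rw [lie_smul]; exact P0.smul_mem c (ha' x)⟩ }
  have hS : S ∈ F := by
    refine ⟨⟨hP0.1, ?_⟩, ?_⟩
    · intro x
      let T : Submodule ℂ L := P0.comap ((toEnd ℂ L X : L →ₗ[ℂ] Module.End ℂ X).flip v)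
      refine root_induct hb T ?_ ?_ ?_ x
      · intro h
        change ⁅(h : L), v⁆ ∈ P0
        rw [hv.1 h]
        exact P0.smul_mem _ hP0.1
      · intro χ hχ e he
        change ⁅e, v⁆ ∈ P0
        rw [hv.2 χ hχ e he]
        exact P0.zero_mem
      · intro χ hχ f hf
        exact hP0.2 χ hχ f hf v hP0.1
    · rintro χ hχ f hf y ⟨hy, hy'⟩
      refine ⟨hP0.2 χ hχ f hf y hy, fun x => ?_⟩
      rw [leibniz_lie]
      exact P0.add_mem (hy' _) (hP0.2 χ hχ f hf _ (hy' x))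
  have hstab : ∀ x : L, ∀ y ∈ P0, ⁅x, y⁆ ∈ P0 := fun x y hy => (hmin S hS hy).2 x
  let N : LieSubmodule ℂ L X := { P0 with lie_mem := fun {x m} hm => hstab x m hm }
  have hN := hg N hP0.1
  rw [eq_top_iff]
  have : P0 = ⊤ := by
    have := congrArg LieSubmodule.toSubmodule hN
    simpa [N] using this
  rw [← this]
  exact hmin P ⟨hvP, hP⟩

lemma iSup_low (hb : IsBase H α) {μ : Module.Dual ℂ H} {v : X} (hv : Sing α μ v) (hg : Gen L v) :
    (⨆ ν ∈ low α μ, wt H X ν) = ⊤ := by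
  refine neg_span hb hv hg _ (le_iSup_wt (S := low α μ) ⟨0, by simp [qs_zero]⟩ hv.1) ?_
  intro χ hχ f hf x hx
  exact low'_le (lower_low hχ hf x hx)

lemma sup_low' (hb : IsBase H α) {μ : Module.Dual ℂ H} {v : X} (hv : Sing α μ v) (hg : Gen L v) :
    Submodule.span ℂ {v} ⊔ (⨆ ν ∈ low' α μ, wt H X ν) = ⊤ := by
  refine neg_span hb hv hg _ (Submodule.mem_sup_left (Submodule.mem_span_singleton_self v)) ?_
  intro χ hχ f hf x _
  refine Submodule.mem_sup_right (lower_low hχ hf x ?_)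
  rw [iSup_low hb hv hg]
  trivial

lemma wt_mem_low (hb : IsBase H α) {μ : Module.Dual ℂ H} {v : X} (hv : Sing α μ v) (hg : Gen L v)
    {ν : Module.Dual ℂ H} {x : X} (hx : x ∈ wt H X ν) (h0 : x ≠ 0) : ν ∈ low α μ := by
  obtain ⟨ν', hν', y, hy, hy0, hy'⟩ := grade (wt H X ν)
    (fun h x hx => by rw [hx h]; exact Submodule.smul_mem _ _ hx) (low α μ) x hx
    (by rw [iSup_low hb hv hg]; trivial) h0
  rwa [wt_unique hy hy' hy0]

lemma self_not_mem_low' (hb : IsBase H α) {μ : Module.Dual ℂ H} : μ ∉ low' α μ := by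
  rintro ⟨c, hc, h⟩
  apply hc
  apply qs_inj hb
  rw [qs_zero]
  simpa using h.symm

lemma low'_disjoint (hb : IsBase H α) {μ : Module.Dual ℂ H} {x : X} (hx : x ∈ wt H X μ)
    (hx' : x ∈ ⨆ ν ∈ low' α μ, wt H X ν) : x = 0 := by
  by_contra h0
  obtain ⟨ν', hν', y, hy, hy0, hy'⟩ := grade (wt H X μ)
    (fun h x hx => by rw [hx h]; exact Submodule.smul_mem _ _ hx) (low' α μ) x hx hx' h0
  rw [← wt_unique hy hy' hy0] at hν'
  exact self_not_mem_low' hb hν'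

lemma wt_top (hb : IsBase H α) {μ : Module.Dual ℂ H} {v : X} (hv : Sing α μ v) (hg : Gen L v)
    {x : X} (hx : x ∈ wt H X μ) : ∃ c : ℂ, x = c • v := by
  have : x ∈ Submodule.span ℂ {v} ⊔ (⨆ ν ∈ low' α μ, wt H X ν) := by
    rw [sup_low' hb hv hg]; trivial
  obtain ⟨a, ha, b, hb', rfl⟩ := Submodule.mem_sup.1 this
  obtain ⟨c, rfl⟩ := Submodule.mem_span_singleton.1 ha
  refine ⟨c, ?_⟩
  have hbμ : b ∈ wt H X μ := by
    have := (wt H X μ).sub_mem hx ((wt H X μ).smul_mem c hv.1)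
    simpa using this
  rw [low'_disjoint hb hbμ hb', add_zero]

/-- Every nonzero proper submodule of a highest weight module contains a singular vector of
strictly lower weight. -/
lemma exists_sing (hb : IsBase H α) {μ : Module.Dual ℂ H} {v : X} (hv : Sing α μ v) (hg : Gen L v)
    (K : LieSubmodule ℂ L X) (hK0 : K ≠ ⊥) (hK1 : K ≠ ⊤) :
    ∃ c : Fin r → ℕ, c ≠ 0 ∧ ∃ s : X, s ≠ 0 ∧ Sing α (μ - qs α c) s := by
  obtain ⟨x, hx, hx0⟩ : ∃ x ∈ K, x ≠ 0 := by
    by_contra! hcon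
    exact hK0 ((LieSubmodule.eq_bot_iff K).2 hcon)
  have h1 : ∃ n : ℕ, ∃ c : Fin r → ℕ, ∑ j, c j = n ∧ ∃ s ∈ K, s ≠ 0 ∧ s ∈ wt H X (μ - qs α c) := by
    obtain ⟨ν, ⟨c, rfl⟩, y, hy⟩ := grade K.toSubmodule (fun h x hx => K.lie_mem hx) (low α μ) x hx
      (by rw [iSup_low hb hv hg]; trivial) hx0
    exact ⟨_, c, rfl, y, hy⟩
  obtain ⟨c, hcn, s, hsK, hs0, hs⟩ := Nat.find_spec h1
  refine ⟨c, ?_, s, hs0, hs, ?_⟩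
  · rintro rfl
    rw [qs_zero, sub_zero] at hs
    obtain ⟨k, rfl⟩ := wt_top hb hv hg hs
    apply hK1
    apply hg
    have hk : k ≠ 0 := fun h => hs0 (by rw [h, zero_smul])
    have := K.smul_mem k⁻¹ hsK
    rwa [smul_smul, inv_mul_cancel₀ hk, one_smul] at this
  · intro χ hχ e he
    by_contra hne
    obtain ⟨d, hd0, rfl⟩ := hχ.exists_qs
    have hw := wt_lie he hs
    obtain ⟨c', hc'⟩ := wt_mem_low hb hv hg hw hne
    have hcc : c = c' + d := by
      apply qs_inj hb
      rw [qs_add]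
      have h2 : qs α c = μ - (μ - qs α c) := by abel
      have h3 : μ - qs α c = μ - qs α c' - qs α d := by rw [← hc']; abel
      rw [h2, h3]; abel
    rw [hc'] at hw
    have hlt : ∑ j, c' j < Nat.find h1 := by
      rw [← hcn, hcc]
      simp only [Pi.add_apply, Finset.sum_add_distrib]
      have : 0 < ∑ j, d j := by
        rw [Nat.pos_iff_ne_zero]
        intro h0
        apply hd0
        ext j
        exact Finset.sum_eq_zero_iff.1 h0 j (Finset.mem_univ j)
      omega
    exact Nat.find_min h1 hlt ⟨c', rfl, _, K.lie_mem hsK, hne, hw⟩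

end HW

end AdjPaper
namespace AdjPaper

section SL2

variable {L : Type} [LieRing L] [LieAlgebra ℂ L]
  {H : LieSubalgebra ℂ L} [H.IsCartanSubalgebra] {r : ℕ}
  {X : Type} [AddCommGroup X] [Module ℂ X] [LieRingModule L X] [LieModule ℂ L X]

/-- The lowering operators are nilpotent at `v`. -/
def LNil (α : Fin r → Module.Dual ℂ H) (v : X) : Prop :=
  ∀ j, ∀ f ∈ wt H L (-α j), ∃ n : ℕ, (toEnd ℂ L X f ^ n) v = 0

variable {α : Fin r → Module.Dual ℂ H}
variable [FiniteDimensional ℂ L] [LieAlgebra.IsSemisimple ℂ L]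

lemma exists_sl2 {χ : Module.Dual ℂ H} {t : H} (h : IsCoroot H χ t) :
    ∃ e ∈ wt H L χ, ∃ f ∈ wt H L (-χ), IsSl2Triple (t : L) e f := by
  obtain ⟨h1, e, he, f, hf, h2⟩ := h
  rw [mem_rootSpace_iff] at he hf
  refine ⟨e, he, f, hf, ?_, h2.symm, ?_, ?_⟩
  · intro h0
    have : t = 0 := Subtype.ext h0
    rw [this] at h1
    simp at h1
  · rw [he t, h1, two_smul, two_nsmul]
  · rw [hf t, LinearMap.neg_apply, h1, neg_smul, two_smul, two_nsmul]

lemma lnil_of_fd [FiniteDimensional ℂ X] (hb : IsBase H α) (v : X) : LNil α v := by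
  intro j f hf
  obtain ⟨n, hn⟩ := LieModule.isNilpotent_toEnd_of_mem_rootSpace (K := ℂ) (M := X) H
    (χ := ⇑(-α j)) (fun h => (hb.isRoot j).1 (by
      have : (-α j) = 0 := DFunLike.coe_injective h
      simpa using this)) (mem_rootSpace_iff.2 hf)
  exact ⟨n, by rw [hn]; rfl⟩

lemma lnil_all (hb : IsBase H α) {v : X} (hg : Gen L v) (hn : LNil α v) (x : X) : LNil α x := by
  intro j f hf
  have hL : ∀ y : L, y ∈ (toEnd ℂ L L f).maxGenEigenspace 0 := by
    intro y
    rw [Module.End.mem_maxGenEigenspace]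
    simpa using lnil_of_fd (X := L) hb y j f hf
  let P : LieSubmodule ℂ L X :=
    { (toEnd ℂ L X f).maxGenEigenspace 0 with
      lie_mem := by
        intro y m hm
        have := lie_mem_maxGenEigenspace_toEnd (hL y) hm
        rwa [zero_add] at this }
  have hP : P = ⊤ := hg P (by
    change v ∈ (toEnd ℂ L X f).maxGenEigenspace 0
    rw [Module.End.mem_maxGenEigenspace]
    simpa using hn j f hf)
  have hx : x ∈ P := by rw [hP]; trivial
  change x ∈ (toEnd ℂ L X f).maxGenEigenspace 0 at hx
  rw [Module.End.mem_maxGenEigenspace] at hx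
  simpa using hx

lemma posRoot_simple (hb : IsBase H α) (j : Fin r) : IsPosRoot H α (α j) :=
  ⟨hb.isRoot j, Pi.single j 1, by
    have := qs_single α j 1
    simp only [Nat.cast_one, one_smul] at this
    rw [← this, qs]⟩

lemma dom_of_lnil (hb : IsBase H α) {hc : Fin r → H} (hco : ∀ j, IsCoroot H (α j) (hc j))
    {ν : Module.Dual ℂ H} {s : X} (hs : Sing α ν s) (hs0 : s ≠ 0) (hn : LNil α s) (j : Fin r) :
    ∃ n : ℕ, ν (hc j) = n := by
  obtain ⟨e, he, f, hf, t⟩ := exists_sl2 (hco j)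
  have P : t.HasPrimitiveVectorWith s (ν (hc j)) :=
    ⟨hs0, hs.1 _, hs.2 _ (posRoot_simple hb j) e he⟩
  have h := hn j f hf
  obtain ⟨m, hm⟩ : ∃ m, Nat.find h = m + 1 := by
    refine Nat.exists_eq_succ_of_ne_zero fun h0 => hs0 ?_
    have := Nat.find_spec h
    rw [h0] at this
    simpa using this
  have h1 := Nat.find_spec h
  have h2 := Nat.find_min h (show m < Nat.find h by omega)
  rw [hm] at h1
  have h3 := P.lie_e_pow_succ_toEnd_f m
  rw [h1, lie_zero] at h3
  have h4 := (smul_eq_zero.1 h3.symm).resolve_right h2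
  refine ⟨m, ?_⟩
  rcases mul_eq_zero.1 h4 with h5 | h5
  · exact absurd h5 (by exact_mod_cast Nat.succ_ne_zero m)
  · exact sub_eq_zero.1 h5

end SL2

end AdjPaper
namespace AdjPaper

section Casimir

variable {L : Type} [LieRing L] [LieAlgebra ℂ L]
  [FiniteDimensional ℂ L] [LieAlgebra.IsSemisimple ℂ L]
  {X : Type} [AddCommGroup X] [Module ℂ X] [LieRingModule L X] [LieModule ℂ L X]

/-- Casimir elements commute with the action. -/
lemma casimir_comm {ι : Type} [Fintype ι] (u w : ι → L)
    (h : ∀ x, ∑ i, killingForm ℂ L (u i) x • w i = x) (x : L) (m : X) :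
    ⁅x, ∑ i, ⁅u i, ⁅w i, m⁆⁆⁆ = ∑ i, ⁅u i, ⁅w i, ⁅x, m⁆⁆⁆ := by
  let k : L →ₗ[ℂ] Module.Dual ℂ L := killingForm ℂ L
  let Φ : L ⊗[ℂ] L →ₗ[ℂ] (L →ₗ[ℂ] L) := (dualTensorHom ℂ L L).comp (k.rTensor L)
  have hk : Function.Injective k := by
    rw [← LinearMap.ker_eq_bot]
    exact LieAlgebra.IsKilling.ker_killingForm_eq_bot ℂ L
  have hΦ : Function.Injective Φ := by
    have h1 : Function.Injective (k.rTensor L) :=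
      Module.Flat.rTensor_preserves_injective_linearMap k hk
    have h2 : Function.Injective (dualTensorHom ℂ L L) := by
      exact (dualTensorHomEquiv ℂ L L).injective
    exact h2.comp h1
  let T : L ⊗[ℂ] L := ∑ i, (⁅x, u i⁆ ⊗ₜ[ℂ] w i + u i ⊗ₜ[ℂ] ⁅x, w i⁆)
  have hT : T = 0 := by
    apply hΦ
    rw [map_zero]
    ext y
    have e : Φ T y = ∑ i, (killingForm ℂ L ⁅x, u i⁆ y • w i + killingForm ℂ L (u i) y • ⁅x, w i⁆) := by
      simp [T, Φ, k, dualTensorHom_apply, LinearMap.sum_apply]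
    rw [e, Finset.sum_add_distrib, LinearMap.zero_apply]
    have e2 : ∑ i, killingForm ℂ L (u i) y • ⁅x, w i⁆ = ⁅x, y⁆ := by
      conv_rhs => rw [← h y, lie_sum]
      simp
    have e3 : ∑ i, killingForm ℂ L ⁅x, u i⁆ y • w i = - ⁅x, y⁆ := by
      conv_rhs => rw [← h ⁅x, y⁆]
      rw [← Finset.sum_neg_distrib]
      refine Finset.sum_congr rfl fun i _ => ?_
      rw [← neg_smul, ← lie_skew, map_neg, LinearMap.neg_apply]
      congr 2
      exact LieModule.traceForm_apply_lie_apply ℂ L L (u i) x y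
    rw [e2, e3, neg_add_cancel]
  let Ψ : L ⊗[ℂ] L →ₗ[ℂ] X := TensorProduct.lift (LinearMap.mk₂ ℂ (fun a b : L => ⁅a, ⁅b, m⁆⁆)
    (by intros; simp) (by intros; simp) (by intros; simp) (by intros; simp))
  have h0 : Ψ T = 0 := by rw [hT, map_zero]
  have h1 : Ψ T = ∑ i, (⁅⁅x, u i⁆, ⁅w i, m⁆⁆ + ⁅u i, ⁅⁅x, w i⁆, m⁆⁆) := by
    simp [Ψ, T]
  rw [h1] at h0
  rw [← sub_eq_zero, ← h0, lie_sum, ← Finset.sum_sub_distrib]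
  refine Finset.sum_congr rfl fun i _ => ?_
  rw [leibniz_lie x (u i), leibniz_lie x (w i), lie_add]
  abel

variable {H : LieSubalgebra ℂ L} [H.IsCartanSubalgebra] {r : ℕ} {α : Fin r → Module.Dual ℂ H}

lemma finite_posRoots : {χ : Module.Dual ℂ H | IsPosRoot H α χ}.Finite := by
  refine Set.Finite.subset (Set.finite_range (fun χ : Weight ℂ H L => Weight.toLinear ℂ H L χ)) ?_
  intro χ hχ
  exact ⟨⟨χ, hχ.1.2⟩, by ext; rfl⟩

/-- The finite set of positive roots. -/
noncomputable def PR (α : Fin r → Module.Dual ℂ H) : Finset (Module.Dual ℂ H) :=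
  (finite_posRoots (α := α)).toFinset

lemma mem_PR {χ : Module.Dual ℂ H} : χ ∈ PR α ↔ IsPosRoot H α χ := by simp [PR]

variable (H) in
/-- The identification of `H*` with `H`. -/
noncomputable def tt : Module.Dual ℂ H ≃ₗ[ℂ] H := (IsKilling.cartanEquivDual H).symm

lemma kf_tt (ν : Module.Dual ℂ H) (h : H) : killingForm ℂ L (tt H ν : L) (h : L) = ν h := by
  have : IsKilling.cartanEquivDual H (tt H ν) h = ν h := by
    rw [tt, LinearEquiv.apply_symm_apply]
  exact this

lemma tt_symm (ν χ : Module.Dual ℂ H) : ν (tt H χ) = χ (tt H ν) := by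
  rw [← kf_tt, ← kf_tt]
  exact LieModule.traceForm_comm ℂ L L _ _

lemma kf_zero {χ ψ : Module.Dual ℂ H} {x y : L} (hx : x ∈ wt H L χ) (hy : y ∈ wt H L ψ)
    (h : χ + ψ ≠ 0) : killingForm ℂ L x y = 0 :=
  killingForm_apply_eq_zero_of_mem_rootSpace_of_add_ne_zero ℂ L H
    (mem_rootSpace_iff.2 hx) (mem_rootSpace_iff.2 hy)
    (fun h0 => h (LinearMap.ext fun t => congrFun h0 t))

lemma root_dim {χ : Module.Dual ℂ H} (hχ : IsRoot H χ) {e : L} (he : e ∈ wt H L χ) (he0 : e ≠ 0)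
    {x : L} (hx : x ∈ wt H L χ) : ∃ c : ℂ, x = c • e := by
  let χ' : Weight ℂ H L := ⟨χ, hχ.2⟩
  have h1 := IsKilling.finrank_rootSpace_eq_one χ' (fun h => hχ.1 (DFunLike.coe_injective h))
  have h2 := (finrank_eq_one_iff_of_nonzero' (⟨e, mem_rootSpace_iff.2 he⟩ : rootSpace H χ)
    (by simpa using he0)).1 h1 ⟨x, mem_rootSpace_iff.2 hx⟩
  obtain ⟨c, hc⟩ := h2
  exact ⟨c, (congrArg Subtype.val hc).symm⟩

lemma exists_pair {χ : Module.Dual ℂ H} (hχ : IsRoot H χ) :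
    ∃ e ∈ wt H L χ, ∃ f ∈ wt H L (-χ), killingForm ℂ L e f = 1 ∧ ⁅e, f⁆ = (tt H χ : L) ∧
      (∀ x ∈ wt H L χ, killingForm ℂ L f x • e = x) ∧
      (∀ x ∈ wt H L (-χ), killingForm ℂ L e x • f = x) := by
  let χ' : Weight ℂ H L := ⟨χ, hχ.2⟩
  have hnz : χ'.IsNonZero := fun h => hχ.1 (DFunLike.coe_injective h)
  obtain ⟨h, e, f, t, he, hf⟩ := IsKilling.exists_isSl2Triple_of_weight_isNonZero hnz
  have hef : ∀ a ∈ wt H L χ, ∀ b ∈ wt H L (-χ), ⁅a, b⁆ = killingForm ℂ L a b • (tt H χ : L) := by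
    intro a ha b hb
    have ha' : a ∈ rootSpace H (⇑χ') := (mem_rootSpace_iff (χ := χ)).2 ha
    have hb' : b ∈ rootSpace H (-⇑χ') := (mem_rootSpace_iff (χ := -χ)).2 hb
    have h1 := IsKilling.lie_eq_killingForm_smul_of_mem_rootSpace_of_mem_rootSpace_neg ha' hb'
    have h2 : Weight.toLinear ℂ H L χ' = χ := by ext; rfl
    rw [h1, h2, tt]
  have he' : e ∈ wt H L χ := mem_rootSpace_iff.1 he
  have hf' : f ∈ wt H L (-χ) := mem_rootSpace_iff.1 hf
  have hk : killingForm ℂ L e f ≠ 0 := by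
    intro h0
    have := hef e he' f hf'
    rw [h0, zero_smul, t.lie_e_f] at this
    exact t.h_ne_zero this
  have he2 : (killingForm ℂ L e f)⁻¹ • e ∈ wt H L χ := Submodule.smul_mem _ _ he'
  have hone : killingForm ℂ L ((killingForm ℂ L e f)⁻¹ • e) f = 1 := by
    rw [map_smul, LinearMap.smul_apply, smul_eq_mul, inv_mul_cancel₀ hk]
  have hcomm : ∀ a b, killingForm ℂ L a b = killingForm ℂ L b a := LieModule.traceForm_comm ℂ L L
  refine ⟨_, he2, f, hf', hone, ?_, ?_, ?_⟩
  · rw [hef _ he2 _ hf', hone, one_smul]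
  · intro x hx
    obtain ⟨c, rfl⟩ := root_dim hχ he2 (smul_ne_zero (inv_ne_zero hk) t.e_ne_zero) hx
    rw [map_smul, hcomm f, hone, smul_eq_mul, mul_one]
  · intro x hx
    obtain ⟨c, rfl⟩ := root_dim hχ.neg hf' t.f_ne_zero hx
    rw [map_smul, hone, smul_eq_mul, mul_one]

lemma posRoot_add_ne {χ ψ : Module.Dual ℂ H} (hb : IsBase H α) (hχ : IsPosRoot H α χ)
    (hψ : IsPosRoot H α ψ) : χ + ψ ≠ 0 := by
  obtain ⟨c, hc, rfl⟩ := hχ.exists_qs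
  obtain ⟨d, hd, rfl⟩ := hψ.exists_qs
  intro h
  rw [← qs_add, ← qs_zero α] at h
  have := qs_inj hb h
  apply hc
  ext j
  have := congrFun this j
  simp at this ⊢
  exact this.1

/-- The Casimir eigenvalue. -/
noncomputable def cas (α : Fin r → Module.Dual ℂ H) (ν : Module.Dual ℂ H) : ℂ :=
  ν (tt H ν) + ∑ β ∈ PR α, ν (tt H β)

lemma exists_casimir (hb : IsBase H α) : ∃ Ω : X →ₗ[ℂ] X, (∀ (x : L) (m : X), Ω ⁅x, m⁆ = ⁅x, Ω m⁆) ∧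
    ∀ ν (s : X), Sing α ν s → Ω s = cas α ν • s := by
  have hpair : ∀ β : PR α, ∃ p : L × L, p.1 ∈ wt H L β.1 ∧ p.2 ∈ wt H L (-β.1) ∧
      ⁅p.1, p.2⁆ = (tt H β.1 : L) ∧
      (∀ x ∈ wt H L β.1, killingForm ℂ L p.2 x • p.1 = x) ∧
      (∀ x ∈ wt H L (-β.1), killingForm ℂ L p.1 x • p.2 = x) := by
    intro β
    obtain ⟨e, he, f, hf, _, h1, h2, h3⟩ := exists_pair (mem_PR.1 β.2).1
    exact ⟨(e, f), he, hf, h1, h2, h3⟩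
  choose p hp1 hp2 hp3 hp4 hp5 using hpair
  let b := Module.finBasis ℂ H
  let ι := (PR α) ⊕ ((PR α) ⊕ Fin (finrank ℂ H))
  let u : ι → L := Sum.elim (fun β => (p β).1) (Sum.elim (fun β => (p β).2)
    (fun i => (tt H (b.coord i) : L)))
  let w : ι → L := Sum.elim (fun β => (p β).2) (Sum.elim (fun β => (p β).1)
    (fun i => (b i : L)))
  have hH0 : ∀ h : H, (h : L) ∈ wt H L 0 := fun h => mem_wt_zero.2 h.2
  have hne : ∀ β : PR α, β.1 ≠ 0 := fun β => (mem_PR.1 β.2).1.1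
  have key : ∀ x, ∑ i, killingForm ℂ L (u i) x • w i = x := by
    let S : Submodule ℂ L := LinearMap.eqLocus
      (∑ i, (killingForm ℂ L (u i)).smulRight (w i)) LinearMap.id
    intro x
    suffices hx : x ∈ S by
      simpa [S, LinearMap.mem_eqLocus, LinearMap.sum_apply] using hx
    have hS : ∀ x, x ∈ S ↔ ∑ i, killingForm ℂ L (u i) x • w i = x := by
      intro x
      simp [S, LinearMap.mem_eqLocus, LinearMap.sum_apply]
    refine root_induct hb S ?_ ?_ ?_ x
    · intro h
      rw [hS, Fintype.sum_sum_type, Fintype.sum_sum_type]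
      simp only [u, w, Sum.elim_inl, Sum.elim_inr]
      rw [Finset.sum_eq_zero, Finset.sum_eq_zero, zero_add, zero_add]
      · simp only [kf_tt]
        have h2 := congrArg (H.toSubmodule.subtype) (b.sum_repr h)
        rw [map_sum] at h2
        exact h2
      · intro β _
        rw [kf_zero (hp2 β) (hH0 h) (by simpa using hne β), zero_smul]
      · intro β _
        rw [kf_zero (hp1 β) (hH0 h) (by simpa using hne β), zero_smul]
    · intro χ hχ e he
      rw [hS, Fintype.sum_sum_type, Fintype.sum_sum_type]
      simp only [u, w, Sum.elim_inl, Sum.elim_inr]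
      rw [Finset.sum_eq_zero, Finset.sum_eq_single ⟨χ, mem_PR.2 hχ⟩, Finset.sum_eq_zero, zero_add,
        add_zero]
      · exact hp4 ⟨χ, mem_PR.2 hχ⟩ e he
      · intro i _
        rw [kf_zero (hH0 _) he (by simpa using hχ.1.1), zero_smul]
      · intro β _ hβ
        rw [kf_zero (hp2 β) he, zero_smul]
        intro h0
        apply hβ
        ext1
        exact (neg_add_eq_zero.1 h0)
      · simp
      · intro β _
        rw [kf_zero (hp1 β) he (posRoot_add_ne hb (mem_PR.1 β.2) hχ), zero_smul]
    · intro χ hχ e he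
      rw [hS, Fintype.sum_sum_type, Fintype.sum_sum_type]
      simp only [u, w, Sum.elim_inl, Sum.elim_inr]
      rw [Finset.sum_eq_single ⟨χ, mem_PR.2 hχ⟩, Finset.sum_eq_zero, Finset.sum_eq_zero, add_zero,
        add_zero]
      · exact hp5 ⟨χ, mem_PR.2 hχ⟩ e he
      · intro i _
        rw [kf_zero (hH0 _) he (by simpa using hχ.1.1), zero_smul]
      · intro β _
        rw [kf_zero (hp2 β) he, zero_smul]
        have := posRoot_add_ne hb (mem_PR.1 β.2) hχ
        intro h0
        apply this
        rw [← neg_eq_zero, ← h0]; abel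
      · intro β _ hβ
        rw [kf_zero (hp1 β) he, zero_smul]
        intro h0
        apply hβ
        ext1
        exact (add_neg_eq_zero.1 h0)
      · simp
  refine ⟨∑ i, (toEnd ℂ L X (u i)).comp (toEnd ℂ L X (w i)), ?_, ?_⟩
  · intro x m
    have := casimir_comm u w key x m
    simp only [LinearMap.sum_apply, LinearMap.comp_apply, toEnd_apply_apply]
    exact this.symm
  · intro ν s hs
    simp only [LinearMap.sum_apply, LinearMap.comp_apply, toEnd_apply_apply]
    rw [Fintype.sum_sum_type, Fintype.sum_sum_type]
    simp only [u, w, Sum.elim_inl, Sum.elim_inr]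
    have e1 : ∑ β : PR α, ⁅(p β).1, ⁅(p β).2, s⁆⁆ = (∑ β ∈ PR α, ν (tt H β)) • s := by
      rw [Finset.sum_smul, ← Finset.sum_coe_sort (PR α)]
      refine Finset.sum_congr rfl fun β _ => ?_
      rw [leibniz_lie, hp3, hs.2 β.1 (mem_PR.1 β.2) _ (hp1 β), lie_zero, add_zero, hs.1]
    have e2 : ∑ β : PR α, ⁅(p β).2, ⁅(p β).1, s⁆⁆ = 0 := by
      refine Finset.sum_eq_zero fun β _ => ?_
      rw [hs.2 β.1 (mem_PR.1 β.2) _ (hp1 β), lie_zero]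
    have e3 : ∑ i, ⁅(tt H (b.coord i) : L), ⁅(b i : L), s⁆⁆ = ν (tt H ν) • s := by
      have : ∀ i, ⁅(tt H (b.coord i) : L), ⁅(b i : L), s⁆⁆ = (b.coord i (tt H ν) * ν (b i)) • s := by
        intro i
        rw [hs.1, lie_smul, hs.1, smul_smul, tt_symm ν, mul_comm]
      simp only [this]
      rw [← Finset.sum_smul]
      congr 1
      have h2 := congrArg ν (b.sum_repr (tt H ν))
      rw [map_sum] at h2
      simpa [Basis.coord_apply] using h2
    rw [e1, e2, e3, cas, add_smul, zero_add, add_comm]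

lemma cas_eq (hb : IsBase H α) {μ ν : Module.Dual ℂ H} {v s : X} (hv : Sing α μ v) (hg : Gen L v)
    (hs : Sing α ν s) (hs0 : s ≠ 0) : cas α μ = cas α ν := by
  obtain ⟨Ω, h1, h2⟩ := exists_casimir (X := X) hb
  let P : LieSubmodule ℂ L X :=
    { LinearMap.ker (Ω - cas α μ • (LinearMap.id : X →ₗ[ℂ] X)) with
      lie_mem := by
        intro x m hm
        have hm' : Ω m = cas α μ • m := by
          have : (Ω - cas α μ • (LinearMap.id : X →ₗ[ℂ] X)) m = 0 := hm
          simpa [sub_eq_zero] using this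
        change (Ω - cas α μ • (LinearMap.id : X →ₗ[ℂ] X)) ⁅x, m⁆ = 0
        simp [h1, hm'] }
  have hP : P = ⊤ := hg P (by
    change (Ω - cas α μ • (LinearMap.id : X →ₗ[ℂ] X)) v = 0
    simp [h2 μ v hv])
  have hsP : s ∈ P := by rw [hP]; trivial
  have : (Ω - cas α μ • (LinearMap.id : X →ₗ[ℂ] X)) s = 0 := hsP
  rw [LinearMap.sub_apply, h2 ν s hs, LinearMap.smul_apply, LinearMap.id_apply, ← sub_smul] at this
  exact (sub_eq_zero.1 ((smul_eq_zero.1 this).resolve_right hs0)).symm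

end Casimir

end AdjPaper
namespace AdjPaper

section Kac

variable {L : Type} [LieRing L] [LieAlgebra ℂ L]
  [FiniteDimensional ℂ L] [LieAlgebra.IsSemisimple ℂ L]
  {X : Type} [AddCommGroup X] [Module ℂ X] [LieRingModule L X] [LieModule ℂ L X]
  {H : LieSubalgebra ℂ L} [H.IsCartanSubalgebra] {r : ℕ} {α : Fin r → Module.Dual ℂ H}

/-- A root as a Mathlib weight. -/
def IsRoot.toWeight {χ : Module.Dual ℂ H} (h : IsRoot H χ) : Weight ℂ H L := ⟨χ, h.2⟩

lemma IsRoot.toWeight_nz {χ : Module.Dual ℂ H} (h : IsRoot H χ) : h.toWeight.IsNonZero :=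
  fun h0 => h.1 (LinearMap.ext fun t => congrFun h0 t)

lemma IsRoot.toLinear {χ : Module.Dual ℂ H} (h : IsRoot H χ) :
    Weight.toLinear ℂ H L h.toWeight = χ := by ext; rfl

lemma coroot_eq {χ : Module.Dual ℂ H} (h : IsRoot H χ) {t : H} (ht : IsCoroot H χ t) :
    t = IsKilling.coroot h.toWeight := by
  obtain ⟨e, he, f, hf, hs⟩ := exists_sl2 ht
  have he' : e ∈ rootSpace H (⇑h.toWeight) := (mem_rootSpace_iff (χ := χ)).2 he
  have hf' : f ∈ rootSpace H (-⇑h.toWeight) := (mem_rootSpace_iff (χ := -χ)).2 hf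
  exact Subtype.ext (hs.h_eq_coroot h.toWeight_nz he' hf')

lemma root_int {χ : Module.Dual ℂ H} (h : IsRoot H χ) {t : H} (ht : IsCoroot H χ t)
    (β : Weight ℂ H L) : ∃ z : ℤ, β t = z := by
  rw [coroot_eq h ht]
  exact ⟨_, IsKilling.apply_coroot_eq_cast h.toWeight β⟩

lemma tt_coroot {χ : Module.Dual ℂ H} (h : IsRoot H χ) {t : H} (ht : IsCoroot H χ t) :
    ∃ k : ℝ, 0 < k ∧ tt H χ = (k : ℂ) • t := by
  obtain ⟨k, hk⟩ : ∃ k : ℂ, tt H χ = k • t := by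
    have h1 := IsKilling.root_apply_cartanEquivDual_symm_ne_zero h.toWeight_nz
    refine ⟨2⁻¹ * χ (tt H χ), ?_⟩
    rw [coroot_eq h ht, IsKilling.coroot]
    rw [h.toLinear] at h1 ⊢
    change χ (tt H χ) ≠ 0 at h1
    change tt H χ = _ • 2 • (χ (tt H χ))⁻¹ • tt H χ
    rw [two_nsmul, ← two_smul ℂ, smul_smul, smul_smul]
    conv_lhs => rw [← one_smul ℂ (tt H χ)]
    congr 1
    field_simp
  have hR : ∃ q : ℝ, 0 ≤ q ∧ killingForm ℂ L t t = q := by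
    have h1 := IsKilling.restrict_killingForm_eq_sum (K := ℂ) (L := L) (H := H)
    have h2 := congrArg (fun F => F t t) h1
    simp only [LinearMap.sum_apply, LinearMap.smulRight_apply, LinearMap.smul_apply] at h2
    have h3 : killingForm ℂ L t t = ∑ β ∈ H.root, (β t * β t) := h2
    choose z hz using root_int h ht
    refine ⟨∑ β ∈ H.root, ((z β : ℝ) * z β), Finset.sum_nonneg fun β _ => mul_self_nonneg _, ?_⟩
    rw [h3]
    push_cast
    exact Finset.sum_congr rfl fun β _ => by rw [hz]
  obtain ⟨q, hq0, hq⟩ := hR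
  have h2 : k * q = 2 := by
    have := kf_tt χ t
    rw [hk, ht.1] at this
    rw [← hq, ← this]
    simp
  have hq1 : q ≠ 0 := by
    rintro rfl
    simp at h2
  refine ⟨2 / q, div_pos two_pos (lt_of_le_of_ne hq0 (Ne.symm hq1)), ?_⟩
  rw [hk]
  congr 1
  push_cast
  rw [eq_div_iff (by exact_mod_cast hq1), h2]

lemma refl_root {χ β : Module.Dual ℂ H} (h : IsRoot H χ) {t : H} (ht : IsCoroot H χ t)
    (hβ : IsRoot H β) : IsRoot H (β - β t • χ) := by
  rw [coroot_eq h ht]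
  refine ⟨?_, (IsKilling.reflectRoot h.toWeight hβ.toWeight).2⟩
  intro h0
  exact IsKilling.reflectRoot_isNonZero h.toWeight hβ.toWeight hβ.toWeight_nz
    (funext fun t => LinearMap.congr_fun h0 t)

lemma refl_pos (hb : IsBase H α) {j : Fin r} {t : H} (ht : IsCoroot H (α j) t)
    {β : Module.Dual ℂ H} (hβ : IsPosRoot H α β) (hne : β ≠ α j) :
    IsPosRoot H α (β - β t • α j) := by
  have hr := refl_root (hb.isRoot j) ht hβ.1
  refine ⟨hr, ?_⟩
  rcases hb.pos_neg _ hr with h | ⟨d, hd⟩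
  · exact h
  exfalso
  obtain ⟨c, hc⟩ := hβ.2
  have h1 : ∑ i, ((c i : ℂ) + d i - (if i = j then β t else 0)) • α i = 0 := by
    simp only [sub_smul, add_smul, Finset.sum_sub_distrib, Finset.sum_add_distrib, ite_smul,
      zero_smul, Finset.sum_ite_eq', Finset.mem_univ, if_true]
    rw [← hc]
    rw [sub_eq_iff_eq_add] at hd
    generalize β t = z at hd ⊢
    rw [hd]; abel
  have h2 := Fintype.linearIndependent_iff.1 hb.indep _ h1
  have h3 : ∀ i, i ≠ j → c i = 0 := by
    intro i hi
    have := h2 i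
    rw [if_neg hi, sub_zero] at this
    have h4 : c i + d i = 0 := by exact_mod_cast this
    omega
  have h4 : β = (c j : ℂ) • α j := by
    rw [hc]
    exact Finset.sum_eq_single j (fun i _ hi => by simp [h3 i hi]) (by simp)
  have h5 : (⇑hβ.1.toWeight : H → ℂ) = (c j : ℂ) • ⇑(hb.isRoot j).toWeight :=
    funext fun t => LinearMap.congr_fun h4 t
  rcases IsKilling.eq_neg_or_eq_of_eq_smul _ _ hβ.1.toWeight_nz _ h5 with h6 | h6
  · refine posRoot_add_ne hb hβ (posRoot_simple hb j) ?_
    have : β = - α j := LinearMap.ext fun t => DFunLike.congr_fun h6 t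
    rw [this, neg_add_cancel]
  · exact hne (LinearMap.ext fun t => DFunLike.congr_fun h6 t)

lemma sum_pos (hb : IsBase H α) {j : Fin r} {t : H} (ht : IsCoroot H (α j) t) :
    ∑ β ∈ PR α, β t = 2 := by
  rw [← Finset.add_sum_erase (PR α) _ (mem_PR.2 (posRoot_simple hb j)), ht.1]
  rw [Finset.sum_involution (fun β _ => β - β t • α j), add_zero]
  · intro β _
    simp [ht.1]; ring
  · intro β _ h0 h1
    apply h0
    rw [sub_eq_self] at h1
    exact (smul_eq_zero.1 h1).resolve_right (hb.isRoot j).1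
  · intro β hβ
    rw [Finset.mem_erase, mem_PR] at hβ ⊢
    refine ⟨?_, refl_pos hb ht hβ.2 hβ.1⟩
    intro h0
    have h1 : β t = -2 := by
      have := LinearMap.congr_fun h0 t
      simp [ht.1] at this
      linear_combination -this
    rw [h1] at h0
    refine posRoot_add_ne hb hβ.2 (posRoot_simple hb j) ?_
    have : β = α j + (-2 : ℂ) • α j := sub_eq_iff_eq_add.1 h0
    rw [this, neg_smul, two_smul]; abel
  · intro β _
    simp only [LinearMap.sub_apply, LinearMap.smul_apply, ht.1, smul_eq_mul]
    rw [show β t - β t * 2 = - β t by ring, neg_smul]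
    abel

lemma kac (hb : IsBase H α) {hc : Fin r → H} (hco : ∀ j, IsCoroot H (α j) (hc j))
    {μ : Module.Dual ℂ H} {v : X} (hv : Sing α μ v) (hv0 : v ≠ 0) (hg : Gen L v)
    (hn : LNil α v) (K : LieSubmodule ℂ L X) : K = ⊥ ∨ K = ⊤ := by
  by_contra! hK
  obtain ⟨c, hc0, s, hs0, hs⟩ := exists_sing hb hv hg K hK.1 hK.2
  have h1 := cas_eq hb hv hg hs hs0
  choose m hm using dom_of_lnil hb hco hv hv0 hn
  choose n hn' using dom_of_lnil hb hco hs hs0 (lnil_all hb hg hn s)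
  choose k hk0 hk using fun j => tt_coroot (hb.isRoot j) (hco j)
  set q := qs α c with hq
  have e1 : cas α μ - cas α (μ - q) = (μ + (μ - q) + ∑ β ∈ PR α, β) (tt H q) := by
    simp only [cas, map_sub, LinearMap.sub_apply, LinearMap.add_apply, LinearMap.sum_apply,
      Finset.sum_sub_distrib]
    rw [tt_symm q μ, Finset.sum_congr rfl fun β _ => tt_symm q β]
    ring
  have e2 : (μ + (μ - q) + ∑ β ∈ PR α, β) (tt H q) =
      ((∑ j, (c j : ℝ) * (k j * (m j + n j + 2)) : ℝ) : ℂ) := by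
    rw [hq, qs, map_sum, map_sum]
    push_cast
    refine Finset.sum_congr rfl fun j _ => ?_
    rw [map_smul, map_smul, hk, map_smul, LinearMap.add_apply, LinearMap.add_apply,
      LinearMap.sum_apply, sum_pos hb (hco j), hm]
    have := hn' j
    rw [hq, qs] at this
    rw [this]
    simp
  rw [h1, sub_self, e2] at e1
  have e3 : (∑ j, (c j : ℝ) * (k j * (m j + n j + 2)) : ℝ) = 0 := by exact_mod_cast e1.symm
  have hpos : ∀ j, 0 < k j * ((m j : ℝ) + n j + 2) := fun j => mul_pos (hk0 j) (by positivity)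
  rw [Finset.sum_eq_zero_iff_of_nonneg
    (fun j _ => mul_nonneg (Nat.cast_nonneg _) (hpos j).le)] at e3
  apply hc0
  ext j
  have := (mul_eq_zero.1 (e3 j (Finset.mem_univ j))).resolve_right (hpos j).ne'
  simpa using this

end Kac

end AdjPaper
namespace AdjPaper

section Univ

variable {L : Type} [LieRing L] [LieAlgebra ℂ L]
  {Z W : Type} [AddCommGroup Z] [Module ℂ Z] [LieRingModule L Z] [LieModule ℂ L Z]
  [AddCommGroup W] [Module ℂ W] [LieRingModule L W] [LieModule ℂ L W]

/-- The product of two Lie modules. -/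
instance prodLRM : LieRingModule L (Z × W) where
  bracket x m := (⁅x, m.1⁆, ⁅x, m.2⁆)
  add_lie x y m := by ext <;> simp
  lie_add x m n := by ext <;> simp
  leibniz_lie x y m := by ext <;> simp

instance prodLM : LieModule ℂ L (Z × W) where
  smul_lie t x m := by ext <;> exact smul_lie _ _ _
  lie_smul t x m := by ext <;> exact lie_smul _ _ _

lemma prod_lie (x : L) (m : Z × W) : ⁅x, m⁆ = (⁅x, m.1⁆, ⁅x, m.2⁆) := rfl

lemma pow_sub_prod (D : LieSubmodule ℂ L (Z × W)) (f : L) (d : D) (n : ℕ) :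
    (((toEnd ℂ L D f ^ n) d : D) : Z × W) =
      ((toEnd ℂ L Z f ^ n) (d : Z × W).1, (toEnd ℂ L W f ^ n) (d : Z × W).2) := by
  induction n with
  | zero => rfl
  | succ n ih =>
    rw [pow_succ', pow_succ', pow_succ']
    simp only [Module.End.mul_apply, toEnd_apply_apply, LieSubmodule.coe_bracket, ih, prod_lie]

lemma pow_zero_add {X : Type} [AddCommGroup X] [Module ℂ X] (f : X →ₗ[ℂ] X) (x : X) (n m : ℕ)
    (h : (f ^ n) x = 0) : (f ^ (m + n)) x = 0 := by
  rw [pow_add, Module.End.mul_apply, h, map_zero]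

variable [FiniteDimensional ℂ L] [LieAlgebra.IsSemisimple ℂ L]
  {H : LieSubalgebra ℂ L} [H.IsCartanSubalgebra] {r : ℕ} {α : Fin r → Module.Dual ℂ H}

lemma univ (hb : IsBase H α) {hc : Fin r → H} (hco : ∀ j, IsCoroot H (α j) (hc j))
    {ν : Module.Dual ℂ H} {z : Z} (hz : Sing α ν z) (hzn : LNil α z)
    {w : W} (hw : Sing α ν w) (hw0 : w ≠ 0) (hwg : Gen L w) (hwn : LNil α w) :
    ∃ g : W →ₗ[ℂ] Z, (∀ (x : L) m, g ⁅x, m⁆ = ⁅x, g m⁆) ∧ g w = z := by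
  let D : LieSubmodule ℂ L (Z × W) := LieSubmodule.lieSpan ℂ L {(z, w)}
  let d : D := ⟨(z, w), LieSubmodule.subset_lieSpan rfl⟩
  have hd0 : d ≠ 0 := fun h => hw0 (congrArg (fun q : D => (q : Z × W).2) h)
  have hds : Sing α ν d := by
    refine ⟨fun h => Subtype.ext ?_, fun χ hχ e he => Subtype.ext ?_⟩
    · change (⁅(h : L), z⁆, ⁅(h : L), w⁆) = (ν h • z, ν h • w)
      rw [hz.1, hw.1]
    · change (⁅e, z⁆, ⁅e, w⁆) = (0, 0)
      rw [hz.2 χ hχ e he, hw.2 χ hχ e he]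
  have hdg : Gen L d := by
    intro P hP
    have h1 : D ≤ P.map D.incl := by
      refine LieSubmodule.lieSpan_le.2 ?_
      rintro _ rfl
      exact (LieSubmodule.mem_map _).2 ⟨d, hP, rfl⟩
    rw [eq_top_iff]
    intro x _
    obtain ⟨y, hy, hyx⟩ := (LieSubmodule.mem_map _).1 (h1 x.2)
    have : y = x := Subtype.ext hyx
    rwa [← this]
  have hdn : LNil α d := by
    intro j f hf
    obtain ⟨n, hn⟩ := hzn j f hf
    obtain ⟨m, hm⟩ := hwn j f hf
    refine ⟨m + n, Subtype.ext ?_⟩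
    rw [pow_sub_prod]
    refine Prod.ext ?_ ?_
    · exact pow_zero_add _ _ n m hn
    · change (toEnd ℂ L W f ^ (m + n)) w = 0
      rw [add_comm]
      exact pow_zero_add _ _ m n hm
  let p : D →ₗ⁅ℂ, L⁆ W :=
    { (LinearMap.snd ℂ Z W).comp D.incl.toLinearMap with
      map_lie' := by intro x m; rfl }
  let q : D →ₗ[ℂ] Z := (LinearMap.fst ℂ Z W).comp D.incl.toLinearMap
  have hpd : p d = w := rfl
  have hk : p.ker = ⊥ := by
    rcases kac hb hco hds hd0 hdg hdn p.ker with h | h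
    · exact h
    · exfalso
      have : d ∈ p.ker := by rw [h]; trivial
      rw [LieModuleHom.mem_ker, hpd] at this
      exact hw0 this
  have hr : p.range = ⊤ := hwg _ ((LieModuleHom.mem_range _ _).2 ⟨d, hpd⟩)
  have hbij : Function.Bijective (p : D →ₗ[ℂ] W) := by
    constructor
    · exact (LieModuleHom.ker_eq_bot p).1 hk
    · intro y
      have : y ∈ p.range := by rw [hr]; trivial
      exact (LieModuleHom.mem_range _ _).1 this
  let E := LinearEquiv.ofBijective (p : D →ₗ[ℂ] W) hbij
  have hE : ∀ y, E y = p y := fun _ => rfl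
  refine ⟨q.comp E.symm.toLinearMap, ?_, ?_⟩
  · intro x m
    obtain ⟨y, rfl⟩ := E.surjective m
    have : ⁅x, E y⁆ = E ⁅x, y⁆ := by rw [hE, hE, LieModuleHom.map_lie]
    rw [this]
    simp only [LinearMap.comp_apply, LinearEquiv.coe_coe, LinearEquiv.symm_apply_apply]
    rfl
  · have : E.symm w = d := by rw [← hpd, ← hE, LinearEquiv.symm_apply_apply]
    simp only [LinearMap.comp_apply, LinearEquiv.coe_coe, this]
    rfl

end Univ

end AdjPaper
namespace AdjPaper

section Verma

variable {L : Type} [LieRing L] [LieAlgebra ℂ L]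
  {H : LieSubalgebra ℂ L} [H.IsCartanSubalgebra] {r : ℕ}

/-- The sum of the positive root spaces. -/
noncomputable def NN (α : Fin r → Module.Dual ℂ H) : Submodule ℂ L :=
  ⨆ ν ∈ {χ | IsPosRoot H α χ}, wt H L ν

variable {α : Fin r → Module.Dual ℂ H}

lemma NN_le {P : Submodule ℂ L} (h : ∀ χ, IsPosRoot H α χ → ∀ e ∈ wt H L χ, e ∈ P) : NN α ≤ P :=
  iSup₂_le fun χ hχ e he => h χ hχ e he

lemma mem_NN {χ : Module.Dual ℂ H} (hχ : IsPosRoot H α χ) {e : L} (he : e ∈ wt H L χ) :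
    e ∈ NN α := le_iSup_wt (S := {χ | IsPosRoot H α χ}) hχ he

lemma NN_H (h : H) {x : L} (hx : x ∈ NN α) : ⁅(h : L), x⁆ ∈ NN α := iSup_wt_stable _ h x hx

variable [FiniteDimensional ℂ L] [LieAlgebra.IsSemisimple ℂ L]

lemma NN_lie (hb : IsBase H α) {x y : L} (hx : x ∈ NN α) (hy : y ∈ NN α) : ⁅x, y⁆ ∈ NN α := by
  have h1 : NN α ≤ Submodule.comap ((toEnd ℂ L L : L →ₗ[ℂ] L →ₗ[ℂ] L).flip y) (NN α) := by
    refine NN_le fun χ hχ e he => ?_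
    have h2 : NN α ≤ Submodule.comap (toEnd ℂ L L e) (NN α) := by
      refine NN_le fun ψ hψ e' he' => ?_
      change ⁅e, e'⁆ ∈ NN α
      have h3 := wt_lie he he'
      by_cases h0 : ⁅e, e'⁆ = 0
      · rw [h0]; exact zero_mem _
      refine mem_NN (χ := χ + ψ) ⟨⟨posRoot_add_ne hb hχ hψ, ?_⟩, ?_⟩ h3
      · intro hbot
        have := mem_rootSpace_iff.2 h3
        rw [hbot] at this
        exact h0 (by simpa using this)
      · obtain ⟨c, -, hc⟩ := hχ.exists_qs
        obtain ⟨d, -, hd⟩ := hψ.exists_qs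
        exact ⟨c + d, by rw [hc, hd, ← qs_add, qs]⟩
    exact h2 hy
  exact h1 hx

lemma neg_mem_NN {χ : Module.Dual ℂ H} (hχ : IsPosRoot H α χ) {e : L} (he : e ∈ wt H L (-χ)) :
    e ∈ NN (-α) := mem_NN (isPosRoot_neg.2 (by rwa [neg_neg])) he

lemma isCompl_NN (hb : IsBase H α) : IsCompl (NN (-α)) (H.toSubmodule ⊔ NN α) := by
  constructor
  · rw [disjoint_iff, Submodule.eq_bot_iff]
    rintro x ⟨hx1, hx2⟩
    by_contra h0
    have hst : ∀ (h : H), ∀ x ∈ H.toSubmodule ⊔ NN α, ⁅(h : L), x⁆ ∈ H.toSubmodule ⊔ NN α := by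
      intro h x hx
      obtain ⟨a, ha, b, hb', rfl⟩ := Submodule.mem_sup.1 hx
      rw [lie_add]
      exact Submodule.add_mem_sup (H.lie_mem h.2 ha) (NN_H h hb')
    obtain ⟨χ, hχ, y, hy, hy0, hyχ⟩ := grade _ hst _ x hx2 hx1 h0
    have hle : H.toSubmodule ⊔ NN α ≤ ⨆ ν ∈ insert 0 {χ | IsPosRoot H α χ}, wt H L ν := by
      refine sup_le (fun a ha => ?_) (NN_le fun χ hχ e he => ?_)
      · exact le_iSup_wt (S := insert 0 {χ | IsPosRoot H α χ}) (Set.mem_insert _ _)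
          (mem_wt_zero.2 ha)
      · exact le_iSup_wt (S := insert 0 {χ | IsPosRoot H α χ}) (Set.mem_insert_of_mem _ hχ) he
    obtain ⟨ψ, hψ, z, hz, hz0, hzψ⟩ := grade (wt H L χ)
      (fun h x hx => by rw [hx h]; exact Submodule.smul_mem _ _ hx) _ y hyχ (hle hy) hy0
    have e1 := wt_unique hz hzψ hz0
    have hχ' : IsPosRoot H (-α) χ := hχ
    subst e1
    rcases hψ with h1 | h1
    · exact hχ'.1.1 h1
    · exact posRoot_add_ne hb h1 (isPosRoot_neg.1 hχ') (add_neg_cancel χ)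
  · rw [codisjoint_iff, eq_top_iff]
    intro x _
    refine root_induct hb _ ?_ ?_ ?_ x
    · intro h
      exact Submodule.mem_sup_right (Submodule.mem_sup_left h.2)
    · intro χ hχ e he
      exact Submodule.mem_sup_right (Submodule.mem_sup_right (mem_NN hχ he))
    · intro χ hχ e he
      exact Submodule.mem_sup_left (neg_mem_NN hχ he)

lemma verma (hb : IsBase H α) (μ : Module.Dual ℂ H) :
    ∃ (M : Type) (_ : AddCommGroup M) (_ : Module ℂ M)
    (_ : LieRingModule L M) (_ : LieModule ℂ L M) (v : M), Sing α μ v ∧ Gen L v ∧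
    ∀ (Z : Type) [AddCommGroup Z] [Module ℂ Z] [LieRingModule L Z] [LieModule ℂ L Z] (z : Z),
      ∃ ψ : M →ₗ[ℂ] Z, ψ v = z ∧ ∀ χ, IsPosRoot H α χ → ∀ f ∈ wt H L (-χ), ∀ m,
        ψ ⁅f, m⁆ = ⁅f, ψ m⁆ := by
  let A : LieSubalgebra ℂ L := { NN (-α) with lie_mem' := fun hx hy => NN_lie hb.neg hx hy }
  have hAc : A.toSubmodule = NN (-α) := rfl
  let p : L →ₗ[ℂ] A := Submodule.projectionOnto _ _ (isCompl_NN hb)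
  let ν : L →ₗ[ℂ] ℂ := killingForm ℂ L (tt H μ : L)
  have hker : ∀ x, p x = 0 ↔ x ∈ H.toSubmodule ⊔ NN α := by
    intro x
    exact Submodule.projectionOnto_apply_eq_zero_iff (isCompl_NN hb)
  have hH0 : ∀ h : H, (h : L) ∈ wt H L 0 := fun h => mem_wt_zero.2 h.2
  have hνp : ∀ {α : Fin r → Module.Dual ℂ H}, ∀ x ∈ NN α, ν x = 0 := by
    intro α x hx
    have : NN α ≤ LinearMap.ker ν := NN_le fun χ hχ e he =>
      kf_zero (hH0 _) he (by simpa using hχ.1.1)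
    exact this hx
  obtain ⟨M, i1, i2, i3, i4, v, h1, h2, h3⟩ := exists_verma A p ν
    (fun a => Submodule.projectionOnto_apply_left (isCompl_NN hb) a)
    (fun a => hνp a a.2) (by
      intro x y hx hy
      have hxy : ⁅x, y⁆ ∈ NN α := by
        obtain ⟨a, ha, b, hb', rfl⟩ := Submodule.mem_sup.1 ((hker x).1 hx)
        obtain ⟨a', ha', b', hb'', rfl⟩ := Submodule.mem_sup.1 ((hker y).1 hy)
        have e1 : ⁅a, a'⁆ = 0 := by
          have := hH0 ⟨a', ha'⟩ ⟨a, ha⟩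
          simpa using this
        rw [add_lie, lie_add, lie_add, e1, zero_add]
        refine add_mem (NN_H ⟨a, ha⟩ hb'') (add_mem ?_ (NN_lie hb hb' hb''))
        rw [← lie_skew]
        exact neg_mem (NN_H ⟨a', ha'⟩ hb')
      exact ⟨(hker _).2 (Submodule.mem_sup_right hxy), hνp _ hxy⟩)
  refine ⟨M, i1, i2, i3, i4, v, ⟨?_, ?_⟩, ?_, ?_⟩
  · intro h
    rw [h1 h ((hker _).2 (Submodule.mem_sup_left h.2))]
    congr 1
    exact kf_tt μ h
  · intro χ hχ e he
    have := mem_NN hχ he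
    rw [h1 e ((hker _).2 (Submodule.mem_sup_right this)), hνp e this, zero_smul]
  · intro P hP
    have := h2 P.toSubmodule hP (fun a m hm => P.lie_mem hm)
    exact LieSubmodule.toSubmodule_injective this
  · intro Z _ _ _ _ z
    obtain ⟨ψ, hψ, hψ2⟩ := h3 Z z
    exact ⟨ψ, hψ, fun χ hχ f hf m => hψ2 ⟨f, neg_mem_NN hχ hf⟩ m⟩

end Verma

end AdjPaper
namespace AdjPaper

section Lift

variable {L : Type} [LieRing L] [LieAlgebra ℂ L]
  [FiniteDimensional ℂ L] [LieAlgebra.IsSemisimple ℂ L]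
  {H : LieSubalgebra ℂ L} [H.IsCartanSubalgebra] {r : ℕ} {α : Fin r → Module.Dual ℂ H}
  {X : Type} [AddCommGroup X] [Module ℂ X] [LieRingModule L X] [LieModule ℂ L X]

lemma posRoot_smul (hb : IsBase H α) {β : Module.Dual ℂ H} (hβ : IsPosRoot H α β) {j : Fin r}
    {c : ℂ} (h4 : β = c • α j) : β = α j := by
  have h5 : (⇑hβ.1.toWeight : H → ℂ) = c • ⇑(hb.isRoot j).toWeight :=
    funext fun t => LinearMap.congr_fun h4 t
  rcases IsKilling.eq_neg_or_eq_of_eq_smul _ _ hβ.1.toWeight_nz _ h5 with h6 | h6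
  · exfalso
    refine posRoot_add_ne hb hβ (posRoot_simple hb j) ?_
    have : β = - α j := LinearMap.ext fun t => DFunLike.congr_fun h6 t
    rw [this, neg_add_cancel]
  · exact LinearMap.ext fun t => DFunLike.congr_fun h6 t

lemma wt_pow {χ μ : Module.Dual ℂ H} {f : L} (hf : f ∈ wt H L (-χ)) {v : X} (hv : v ∈ wt H X μ)
    (n : ℕ) : (toEnd ℂ L X f ^ n) v ∈ wt H X (μ - (n : ℂ) • χ) := by
  induction n with
  | zero => simpa using hv
  | succ n ih =>
    rw [pow_succ', Module.End.mul_apply, toEnd_apply_apply]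
    have := wt_lie hf ih
    convert this using 1
    push_cast
    rw [add_smul, one_smul]
    abel

/-- The vectors `f_j ^ (μ_j + 1) v` are singular. -/
lemma sing_pow (hb : IsBase H α) {j : Fin r} {t : H} (ht : IsCoroot H (α j) t)
    {e f : L} (he : e ∈ wt H L (α j)) (hf : f ∈ wt H L (-α j)) (hs : IsSl2Triple (t : L) e f)
    {μ : Module.Dual ℂ H} {v : X} (hv : Sing α μ v) (hg : Gen L v) {n : ℕ} (hn : μ t = n) :
    Sing α (μ - ((n + 1 : ℕ) : ℂ) • α j) ((toEnd ℂ L X f ^ (n + 1)) v) := by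
  refine ⟨wt_pow hf hv.1 _, ?_⟩
  intro β hβ x hx
  by_cases hv0 : v = 0
  · rw [hv0, map_zero, lie_zero]
  by_cases hβj : β = α j
  · subst hβj
    have P : hs.HasPrimitiveVectorWith v (μ t) := ⟨hv0, hv.1 _, hv.2 _ hβ e he⟩
    have h3 := P.lie_e_pow_succ_toEnd_f n
    obtain ⟨c, rfl⟩ := root_dim hβ.1 he hs.e_ne_zero hx
    rw [smul_lie, h3, hn, sub_self, mul_zero, zero_smul, smul_zero]
  · by_contra h0
    have h1 := wt_lie hx (wt_pow hf hv.1 (n + 1))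
    obtain ⟨c, hc⟩ := wt_mem_low hb hv hg h1 h0
    obtain ⟨b, -, hbq⟩ := hβ.exists_qs
    have h2 : qs α (b + c) = qs α (Pi.single j (n + 1)) := by
      rw [qs_add, qs_single, ← hbq]
      generalize ((n + 1 : ℕ) : ℂ) • α j = z at hc ⊢
      have : β + (μ - z) - (μ - qs α c) = 0 := sub_eq_zero.2 hc
      rw [← sub_eq_zero, ← this]; abel
    have h3 := qs_inj hb h2
    have h4 : b = Pi.single j (b j) := by
      ext i
      by_cases hi : i = j
      · subst hi; simp
      · have := congrFun h3 i
        simp [hi] at this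
        simp [hi, this.1]
    rw [h4, qs_single] at hbq
    exact hβj (posRoot_smul hb hβ hbq)

lemma killed_of_sing (hb : IsBase H α) {ν : Module.Dual ℂ H} {s : X} (hs : Sing α ν s)
    {Y : Type} [AddCommGroup Y] [Module ℂ Y] [LieRingModule L Y] [LieModule ℂ L Y]
    (ψ : X →ₗ[ℂ] Y) (hψ : ∀ χ, IsPosRoot H α χ → ∀ f ∈ wt H L (-χ), ∀ m, ψ ⁅f, m⁆ = ⁅f, ψ m⁆)
    (h0 : ψ s = 0) : ∀ x ∈ LieSubmodule.lieSpan ℂ L {s}, ψ x = 0 := by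
  let D : LieSubmodule ℂ L X := LieSubmodule.lieSpan ℂ L {s}
  let d : D := ⟨s, LieSubmodule.subset_lieSpan rfl⟩
  have hds : Sing α ν d :=
    ⟨fun h => Subtype.ext (hs.1 h), fun χ hχ e he => Subtype.ext (hs.2 χ hχ e he)⟩
  have hdg : Gen L d := by
    intro P hP
    have h1 : D ≤ P.map D.incl := by
      refine LieSubmodule.lieSpan_le.2 ?_
      rintro _ rfl
      exact (LieSubmodule.mem_map _).2 ⟨d, hP, rfl⟩
    rw [eq_top_iff]
    intro x _
    obtain ⟨y, hy, hyx⟩ := (LieSubmodule.mem_map _).1 (h1 x.2)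
    have : y = x := Subtype.ext hyx
    rwa [← this]
  let ψ' : D →ₗ[ℂ] Y := ψ.comp D.incl.toLinearMap
  have hP : LinearMap.ker ψ' = ⊤ := by
    refine neg_span hb hds hdg _ h0 ?_
    intro χ hχ f hf x hx
    have hx' : ψ (x : X) = 0 := hx
    change ψ ⁅f, (x : X)⁆ = 0
    rw [hψ χ hχ f hf, hx', lie_zero]
  intro x hx
  have : (⟨x, hx⟩ : D) ∈ LinearMap.ker ψ' := by rw [hP]; trivial
  exact this

lemma map_pow_eq {M Y : Type} [AddCommGroup M] [Module ℂ M] [LieRingModule L M] [LieModule ℂ L M]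
    [AddCommGroup Y] [Module ℂ Y] [LieRingModule L Y] [LieModule ℂ L Y] (ψ : M →ₗ[ℂ] Y) (f : L)
    (h : ∀ m, ψ ⁅f, m⁆ = ⁅f, ψ m⁆) (v : M) (n : ℕ) :
    ψ ((toEnd ℂ L M f ^ n) v) = (toEnd ℂ L Y f ^ n) (ψ v) := by
  induction n with
  | zero => rfl
  | succ n ih =>
    rw [pow_succ', pow_succ', Module.End.mul_apply, Module.End.mul_apply, toEnd_apply_apply,
      toEnd_apply_apply, h, ih]

/-- Existence of the `n⁻`-equivariant map with prescribed value at the highest weight vector. -/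
lemma exists_psi (hb : IsBase H α) {hc : Fin r → H} (hco : ∀ j, IsCoroot H (α j) (hc j))
    {μ : Module.Dual ℂ H} (hμ : IsDomInt hc μ) {v : X} (hv : Sing α μ v) (hv0 : v ≠ 0)
    (hg : Gen L v) (hn : LNil α v) (h0 : H) (hh : ∀ j, μ (hc j) = 0 → α j h0 = 0) :
    ∃ ψ : X →ₗ[ℂ] L, ψ v = h0 ∧ ∀ χ, IsPosRoot H α χ → ∀ f ∈ wt H L (-χ), ∀ m,
      ψ ⁅f, m⁆ = ⁅f, ψ m⁆ := by
  obtain ⟨M, _, _, _, _, w, hw, hwg, huniv⟩ := verma (L := L) hb μ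
  obtain ⟨ψ, hψw, hψ⟩ := huniv L (h0 : L)
  choose m hm using hμ
  choose e he f hf hs using fun j => exists_sl2 (hco j)
  let s : Fin r → M := fun j => (toEnd ℂ L M (f j) ^ (m j + 1)) w
  let K : LieSubmodule ℂ L M := ⨆ j, LieSubmodule.lieSpan ℂ L {s j}
  have hsK : ∀ j, s j ∈ K := fun j =>
    le_iSup (fun j => LieSubmodule.lieSpan ℂ L {s j}) j (LieSubmodule.subset_lieSpan rfl)
  have hψs : ∀ j, ψ (s j) = 0 := by
    intro j
    have e1 : ⁅f j, (h0 : L)⁆ = α j h0 • f j := by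
      rw [← lie_skew, hf j h0, LinearMap.neg_apply, neg_smul, neg_neg]
    change ψ ((toEnd ℂ L M (f j) ^ (m j + 1)) w) = 0
    rw [map_pow_eq ψ (f j) (hψ _ (posRoot_simple hb j) _ (hf j)), hψw]
    rcases Nat.eq_zero_or_pos (m j) with hz | hz
    · rw [hz, zero_add, pow_one, toEnd_apply_apply, e1, hh j (by rw [hm, hz]; simp), zero_smul]
    · obtain ⟨k, hk⟩ := Nat.exists_eq_succ_of_ne_zero hz.ne'
      rw [hk, Nat.succ_eq_add_one, pow_succ, pow_succ, Module.End.mul_apply, Module.End.mul_apply,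
        toEnd_apply_apply, toEnd_apply_apply, e1, lie_smul, lie_self, smul_zero, map_zero]
  have hKψ : K.toSubmodule ≤ LinearMap.ker ψ := by
    rw [LieSubmodule.iSup_toSubmodule]
    refine iSup_le fun j x hx => ?_
    exact killed_of_sing hb (sing_pow hb (hco j) (he j) (hf j) (hs j) hw hwg (hm j)) ψ hψ
      (hψs j) x hx
  let π := LieSubmodule.Quotient.mk' K
  let z : M ⧸ K := π w
  have hπ : ∀ x y, π ⁅x, y⁆ = ⁅x, π y⁆ := fun x y => LieModuleHom.map_lie π x y
  have hz : Sing α μ z := by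
    refine ⟨fun h => ?_, fun χ hχ e he => ?_⟩
    · change ⁅(h : L), π w⁆ = μ h • π w
      rw [← hπ, hw.1, map_smul]
    · change ⁅e, π w⁆ = 0
      rw [← hπ, hw.2 χ hχ e he, map_zero]
  have hzn : LNil α z := by
    intro j g hg'
    obtain ⟨c, rfl⟩ := root_dim (hb.isRoot j).neg (hf j) (hs j).f_ne_zero hg'
    refine ⟨m j + 1, ?_⟩
    rw [map_smul, smul_pow, LinearMap.smul_apply]
    have := map_pow_eq (L := L) (π : M →ₗ[ℂ] M ⧸ K) (f j) (hπ (f j)) w (m j + 1)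
    change _ = (toEnd ℂ L (M ⧸ K) (f j) ^ (m j + 1)) z at this
    rw [← this]
    have h2 : π (s j) = 0 := (LieSubmodule.Quotient.mk_eq_zero K).2 (hsK j)
    change _ • π (s j) = 0
    rw [h2, smul_zero]
  obtain ⟨g, hg1, hg2⟩ := univ hb hco hz hzn hv hv0 hg hn
  let ψ' : (M ⧸ K) →ₗ[ℂ] L := Submodule.liftQ K.toSubmodule ψ hKψ
  have hψ' : ∀ y, ψ' (π y) = ψ y := fun y => Submodule.liftQ_apply _ _ _
  refine ⟨ψ'.comp g, ?_, ?_⟩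
  · rw [LinearMap.comp_apply, hg2]
    exact (hψ' w).trans hψw
  · intro χ hχ f hf x
    rw [LinearMap.comp_apply, LinearMap.comp_apply, hg1]
    obtain ⟨y, hy⟩ := LieSubmodule.Quotient.surjective_mk' K (g x)
    rw [← hy]
    change ψ' ⁅f, π y⁆ = ⁅f, ψ' (π y)⁆
    rw [← hπ, hψ', hψ', hψ χ hχ f hf]

lemma psi_weight (hb : IsBase H α) {μ : Module.Dual ℂ H} {v : X} (hv : Sing α μ v)
    (hg : Gen L v) {ψ : X →ₗ[ℂ] L} {h0 : H} (h1 : ψ v = h0)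
    (h2 : ∀ χ, IsPosRoot H α χ → ∀ f ∈ wt H L (-χ), ∀ m, ψ ⁅f, m⁆ = ⁅f, ψ m⁆) :
    Sing (-α) (-μ) ψ := by
  constructor
  · intro h
    let F : X →ₗ[ℂ] L := (toEnd ℂ L L (h : L)).comp ψ - ψ.comp (toEnd ℂ L X (h : L)) + μ h • ψ
    have hF : ∀ x, F x = ⁅(h : L), ψ x⁆ - ψ ⁅(h : L), x⁆ + μ h • ψ x := fun _ => rfl
    have hk : LinearMap.ker F = ⊤ := by
      refine neg_span hb hv hg _ ?_ ?_
      · rw [LinearMap.mem_ker, hF, hv.1, h1, map_smul, h1, (mem_wt_zero.2 h0.2 : (h0 : L) ∈ wt H L 0)]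
        simp
      · intro χ hχ f hf x hx
        rw [LinearMap.mem_ker, hF] at hx ⊢
        rw [leibniz_lie (h : L) f x, hf h, smul_lie, map_add, map_smul, h2 χ hχ f hf,
          h2 χ hχ f hf, leibniz_lie (h : L) f, hf h, smul_lie]
        have : ⁅f, ⁅(h : L), ψ x⁆ - ψ ⁅(h : L), x⁆ + μ h • ψ x⁆ = 0 := by rw [hx, lie_zero]
        rw [lie_add, lie_sub, lie_smul] at this
        rw [← this]
        abel
    ext x
    have : F x = 0 := by
      have : x ∈ LinearMap.ker F := by rw [hk]; trivial
      exact this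
    rw [hF] at this
    rw [LieHom.lie_apply, LinearMap.smul_apply, LinearMap.neg_apply, neg_smul]
    exact eq_neg_of_add_eq_zero_left this
  · intro χ hχ e he
    ext x
    rw [LieHom.lie_apply, LinearMap.zero_apply]
    have := h2 (-χ) (isPosRoot_neg.1 hχ) e (by rwa [neg_neg]) x
    rw [this, sub_self]

end Lift

end AdjPaper
namespace AdjPaper

section Pair

variable {L : Type} [LieRing L] [LieAlgebra ℂ L]
  {V W : Type} [AddCommGroup V] [Module ℂ V] [LieRingModule L V] [LieModule ℂ L V]
  [FiniteDimensional ℂ V]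
  [AddCommGroup W] [Module ℂ W] [LieRingModule L W] [LieModule ℂ L W] [FiniteDimensional ℂ W]

lemma pair_bij (B : W →ₗ[ℂ] V →ₗ[ℂ] ℂ) (h1 : ∀ w, (∀ v, B w v = 0) → w = 0)
    (h2 : ∀ v, (∀ w, B w v = 0) → v = 0) :
    Function.Bijective B ∧ Function.Bijective B.flip := by
  have i1 : Function.Injective B := by
    rw [← LinearMap.ker_eq_bot, LinearMap.ker_eq_bot']
    exact fun w hw => h1 w fun v => by rw [hw]; rfl
  have i2 : Function.Injective B.flip := by
    rw [← LinearMap.ker_eq_bot, LinearMap.ker_eq_bot']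
    exact fun v hv => h2 v fun w => LinearMap.congr_fun hv w
  have d1 : finrank ℂ (Dual ℂ V) = finrank ℂ V := Subspace.dual_finrank_eq
  have d2 : finrank ℂ (Dual ℂ W) = finrank ℂ W := Subspace.dual_finrank_eq
  have l1 : finrank ℂ W ≤ finrank ℂ (Dual ℂ V) := LinearMap.finrank_le_finrank_of_injective i1
  have l2 : finrank ℂ V ≤ finrank ℂ (Dual ℂ W) := LinearMap.finrank_le_finrank_of_injective i2
  have e : finrank ℂ V = finrank ℂ W := by omega
  refine ⟨⟨i1, ?_⟩, ⟨i2, ?_⟩⟩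
  · exact (LinearMap.injective_iff_surjective_of_finrank_eq_finrank (by rw [d1, e])).1 i1
  · exact (LinearMap.injective_iff_surjective_of_finrank_eq_finrank (by rw [d2, e])).1 i2

/-- The equivalence `L ⊗ V ⊗ W ≃ Hom(W, Hom(V, L))`. -/
noncomputable def xi (B : W →ₗ[ℂ] V →ₗ[ℂ] ℂ) (h1 : Function.Bijective B)
    (h2 : Function.Bijective B.flip) :
    (L ⊗[ℂ] (V ⊗[ℂ] W)) ≃ₗ[ℂ] (W →ₗ[ℂ] V →ₗ[ℂ] L) :=
  TensorProduct.comm ℂ L (V ⊗[ℂ] W) ≪≫ₗ TensorProduct.assoc ℂ V W L ≪≫ₗ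
    TensorProduct.congr (LinearEquiv.ofBijective B.flip h2)
      (TensorProduct.congr (LinearEquiv.ofBijective B h1) (LinearEquiv.refl ℂ L) ≪≫ₗ
        dualTensorHomEquiv ℂ V L) ≪≫ₗ dualTensorHomEquiv ℂ W (V →ₗ[ℂ] L)

lemma xi_apply (B : W →ₗ[ℂ] V →ₗ[ℂ] ℂ) (h1 : Function.Bijective B)
    (h2 : Function.Bijective B.flip) (x : L) (a : V) (b : W) (w : W) (v : V) :
    xi B h1 h2 (x ⊗ₜ (a ⊗ₜ b)) w v = B w a • B b v • x := by
  rfl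

lemma xi_lie (B : W →ₗ[ℂ] V →ₗ[ℂ] ℂ) (h1 : Function.Bijective B)
    (h2 : Function.Bijective B.flip) (hB : ∀ (x : L) (w : W) (v : V), B ⁅x, w⁆ v + B w ⁅x, v⁆ = 0)
    (y : L) (T : L ⊗[ℂ] (V ⊗[ℂ] W)) : xi B h1 h2 ⁅y, T⁆ = ⁅y, xi B h1 h2 T⁆ := by
  induction T using TensorProduct.induction_on with
  | zero => simp only [lie_zero, map_zero]
  | add S T hS hT => rw [lie_add, map_add, hS, hT, map_add, lie_add]
  | tmul x S =>
    induction S using TensorProduct.induction_on with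
    | zero => simp only [TensorProduct.tmul_zero, lie_zero, map_zero]
    | add S T hS hT => rw [TensorProduct.tmul_add, lie_add, map_add, hS, hT, map_add, lie_add]
    | tmul a b =>
      ext w v
      rw [TensorProduct.LieModule.lie_tmul_right, TensorProduct.LieModule.lie_tmul_right,
        TensorProduct.tmul_add, map_add, map_add, LieHom.lie_apply, LinearMap.sub_apply,
        LieHom.lie_apply]
      simp only [LinearMap.add_apply, xi_apply]
      have e1 := eq_neg_of_add_eq_zero_left (hB y w a)
      have e2 := eq_neg_of_add_eq_zero_left (hB y b v)
      rw [e1, e2, lie_smul, lie_smul]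
      module

lemma finrank_inv (B : W →ₗ[ℂ] V →ₗ[ℂ] ℂ) (h1 : Function.Bijective B)
    (h2 : Function.Bijective B.flip) (hB : ∀ (x : L) (w : W) (v : V), B ⁅x, w⁆ v + B w ⁅x, v⁆ = 0) :
    finrank ℂ (maxTrivSubmodule ℂ L (L ⊗[ℂ] (V ⊗[ℂ] W))) =
      finrank ℂ (W →ₗ⁅ℂ,L⁆ (V →ₗ[ℂ] L)) := by
  let E : (L ⊗[ℂ] (V ⊗[ℂ] W)) ≃ₗ⁅ℂ,L⁆ (W →ₗ[ℂ] V →ₗ[ℂ] L) :=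
    { xi B h1 h2 with map_lie' := fun {y T} => xi_lie B h1 h2 hB y T }
  exact LinearEquiv.finrank_eq
    (((maxTrivEquiv E).toLinearEquiv).trans maxTrivLinearMapEquivLieModuleHom)

end Pair

section Count

variable {L : Type} [LieRing L] [LieAlgebra ℂ L]
  [FiniteDimensional ℂ L] [LieAlgebra.IsSemisimple ℂ L]
  {H : LieSubalgebra ℂ L} [H.IsCartanSubalgebra] {r : ℕ} {α : Fin r → Module.Dual ℂ H}

lemma base_span (hb : IsBase H α) : Submodule.span ℂ (Set.range α) = ⊤ := by
  rw [eq_top_iff, ← IsKilling.span_weight_isNonZero_eq_top (K := ℂ) (L := L) (H := H),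
    Submodule.span_le]
  rintro _ ⟨β, hβ, rfl⟩
  have hr : IsRoot H (Weight.toLinear ℂ H L β) := by
    refine ⟨?_, β.genWeightSpace_ne_bot⟩
    intro h
    exact hβ (funext fun t => LinearMap.congr_fun h t)
  have hs : ∀ c : Fin r → ℕ, ∑ j, (c j : ℂ) • α j ∈ Submodule.span ℂ (Set.range α) := fun c =>
    Submodule.sum_mem _ fun j _ => Submodule.smul_mem _ _ (Submodule.subset_span ⟨j, rfl⟩)
  rcases hb.pos_neg _ hr with ⟨c, hc⟩ | ⟨c, hc⟩
  · rw [SetLike.mem_coe, hc]; exact hs c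
  · rw [SetLike.mem_coe, hc]; exact Submodule.neg_mem _ (hs c)

/-- The space of `h` killed by the simple roots indexed by `J`. -/
def kerS (α : Fin r → Module.Dual ℂ H) (J : Fin r → Prop) : Submodule ℂ H where
  carrier := {h | ∀ j, J j → α j h = 0}
  zero_mem' := fun j _ => map_zero _
  add_mem' := fun ha hb j hj => by rw [map_add, ha j hj, hb j hj, add_zero]
  smul_mem' := fun c x hx j hj => by rw [map_smul, hx j hj, smul_zero]

lemma finrank_kerS (hb : IsBase H α) (J : Fin r → Prop) :
    finrank ℂ (kerS α J) = (Finset.univ.filter fun j => ¬ J j).card := by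
  have hinj : Function.Injective (LinearMap.pi α) := by
    rw [← LinearMap.ker_eq_bot, LinearMap.ker_eq_bot']
    intro h hh
    rw [← Module.forall_dual_apply_eq_zero_iff ℂ]
    intro φ
    have : φ ∈ Submodule.span ℂ (Set.range α) := by rw [base_span hb]; trivial
    induction this using Submodule.span_induction with
    | mem x hx => obtain ⟨j, rfl⟩ := hx; exact congrFun hh j
    | zero => rfl
    | add x y _ _ hx hy => rw [LinearMap.add_apply, hx, hy, add_zero]
    | smul c x _ hx => rw [LinearMap.smul_apply, hx, smul_zero]
  have hd : finrank ℂ H = finrank ℂ (Fin r → ℂ) := by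
    rw [← Subspace.dual_finrank_eq, ← finrank_top, ← base_span hb, finrank_span_eq_card hb.indep]
    simp
  have hsur := (LinearMap.injective_iff_surjective_of_finrank_eq_finrank hd).1 hinj
  let T : H →ₗ[ℂ] ({j // J j} → ℂ) := LinearMap.pi fun j => α j.1
  have hT : LinearMap.ker T = kerS α J := by
    ext h
    rw [LinearMap.mem_ker]
    exact ⟨fun hh j hj => congrFun hh ⟨j, hj⟩, fun hh => funext fun j => hh j.1 j.2⟩
  have hTs : Function.Surjective T := by
    intro y
    obtain ⟨h, hh⟩ := hsur (fun j => if hj : J j then y ⟨j, hj⟩ else 0)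
    refine ⟨h, funext fun j => ?_⟩
    have := congrFun hh j.1
    simp only [j.2, dif_pos] at this
    exact this
  have := LinearMap.finrank_range_add_finrank_ker T
  rw [hT, LinearMap.range_eq_top.2 hTs, finrank_top, hd] at this
  simp only [finrank_fintype_fun_eq_card, Fintype.card_fin, Fintype.card_subtype] at this
  have h3 := Finset.card_filter_add_card_filter_not (s := (Finset.univ : Finset (Fin r))) J
  simp only [Finset.card_univ, Fintype.card_fin] at h3
  have h4 : (Finset.univ.filter fun j => J j).card + finrank ℂ (kerS α J) = r := this
  have h5 : (Finset.univ.filter fun j => J j).card + (Finset.univ.filter fun j => ¬ J j).card = r := by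
    convert h3
  exact Nat.add_left_cancel (h4.trans h5.symm)

end Count

end AdjPaper
namespace AdjPaper

section Main

variable {L : Type} [LieRing L] [LieAlgebra ℂ L]
  [FiniteDimensional ℂ L] [LieAlgebra.IsSemisimple ℂ L]
  {H : LieSubalgebra ℂ L} [H.IsCartanSubalgebra] {r : ℕ} {α : Fin r → Module.Dual ℂ H}
  {V W : Type} [AddCommGroup V] [Module ℂ V] [LieRingModule L V] [LieModule ℂ L V]
  [FiniteDimensional ℂ V]
  [AddCommGroup W] [Module ℂ W] [LieRingModule L W] [LieModule ℂ L W] [FiniteDimensional ℂ W]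

/-- The dual of a highest weight irreducible has a generating lowest weight vector. -/
lemma exists_lowest (hb : IsBase H α) {μ : Module.Dual ℂ H} {v : V} (hv : Sing α μ v)
    (hv0 : v ≠ 0) (hg : Gen L v) (hs : IsSimpleOrder (LieSubmodule ℂ L V))
    (B : W →ₗ[ℂ] V →ₗ[ℂ] ℂ) (h1 : Function.Bijective B)
    (h2 : Function.Bijective B.flip) (hB : ∀ (x : L) (w : W) (v : V), B ⁅x, w⁆ v + B w ⁅x, v⁆ = 0) :
    ∃ w : W, w ≠ 0 ∧ Sing (-α) (-μ) w ∧ Gen L w := by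
  have hvN : v ∉ ⨆ ν ∈ low' α μ, wt H V ν := fun h => hv0 (low'_disjoint hb hv.1 h)
  obtain ⟨l, hlv, hlN⟩ := Submodule.exists_le_ker_of_notMem hvN
  obtain ⟨w, hw⟩ := h1.2 l
  have hBw : ∀ x, B w x = l x := fun x => by rw [hw]
  have hB' : ∀ (x : L) (w : W) (v : V), B ⁅x, w⁆ v = - B w ⁅x, v⁆ := fun x w v =>
    eq_neg_of_add_eq_zero_left (hB x w v)
  refine ⟨w, ?_, ⟨?_, ?_⟩, ?_⟩
  · rintro rfl
    apply hlv
    rw [← hBw, map_zero, LinearMap.zero_apply]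
  · intro h
    apply h1.1
    ext x
    rw [hB', hBw, map_smul, LinearMap.smul_apply, hBw]
    let G : V →ₗ[ℂ] ℂ := l.comp (toEnd ℂ L V (h : L)) - μ h • l
    have hG : LinearMap.ker G = ⊤ := by
      rw [eq_top_iff, ← sup_low' hb hv hg, sup_le_iff]
      constructor
      · rw [Submodule.span_singleton_le_iff_mem, LinearMap.mem_ker]
        change l ⁅(h : L), v⁆ - μ h • l v = 0
        rw [hv.1 h, map_smul, sub_self]
      · intro y hy
        rw [LinearMap.mem_ker]
        change l ⁅(h : L), y⁆ - μ h • l y = 0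
        rw [show l y = 0 from hlN hy, show l ⁅(h : L), y⁆ = 0 from hlN (iSup_wt_stable _ h y hy)]
        simp
    have hx : x ∈ LinearMap.ker G := by rw [hG]; trivial
    have hx' : l ⁅(h : L), x⁆ - μ h • l x = 0 := hx
    rw [sub_eq_zero.1 hx', LinearMap.neg_apply, neg_smul]
  · intro χ hχ e he
    apply h1.1
    ext x
    have hx : x ∈ ⨆ ν ∈ low α μ, wt H V ν := by rw [iSup_low hb hv hg]; trivial
    have := lower_low (isPosRoot_neg.1 hχ) (f := e) (by rwa [neg_neg]) x hx
    rw [hB', hBw, show l ⁅e, x⁆ = 0 from hlN this, map_zero, neg_zero, LinearMap.zero_apply]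
  · intro P hP
    by_contra hne
    have hlt : (P : Submodule ℂ W) < ⊤ := by
      rw [lt_top_iff_ne_top]
      intro h
      exact hne (by rwa [LieSubmodule.toSubmodule_eq_top] at h)
    obtain ⟨φ, hφ0, hφ⟩ := Submodule.exists_le_ker_of_lt_top _ hlt
    obtain ⟨x, hx⟩ := h2.2 φ
    let A : LieSubmodule ℂ L V :=
      { carrier := {y | ∀ p ∈ P, B p y = 0}
        zero_mem' := fun p _ => map_zero _
        add_mem' := fun {a b} ha hb p hp => by rw [map_add, ha p hp, hb p hp, add_zero]
        smul_mem' := fun c a ha p hp => by rw [map_smul, ha p hp, smul_zero]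
        lie_mem := fun {y m} hm p hp => by
          have := hB y p m
          rw [hm _ (P.lie_mem hp), zero_add] at this
          exact this }
    have hxA : x ∈ A := fun p hp => by
      have h3 : φ p = 0 := hφ hp
      rw [← hx] at h3
      exact h3
    rcases hs.eq_bot_or_eq_top A with hA | hA
    · rw [hA, LieSubmodule.mem_bot] at hxA
      apply hφ0
      rw [← hx, hxA, map_zero]
    · have : v ∈ A := by rw [hA]; trivial
      exact hlv (by rw [← hBw]; exact this w hP)

lemma finrank_hom (hb : IsBase H α) {hc : Fin r → H} (hco : ∀ j, IsCoroot H (α j) (hc j))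
    {μ : Module.Dual ℂ H} (hμ : IsDomInt hc μ) {v : V} (hv : Sing α μ v)
    (hv0 : v ≠ 0) (hg : Gen L v) {w : W} (hw0 : w ≠ 0) (hw : Sing (-α) (-μ) w) (hwg : Gen L w) :
    finrank ℂ (W →ₗ⁅ℂ,L⁆ (V →ₗ[ℂ] L)) = finrank ℂ (kerS α fun j => μ (hc j) = 0) := by
  let ev : (W →ₗ⁅ℂ,L⁆ (V →ₗ[ℂ] L)) →ₗ[ℂ] L :=
    { toFun := fun Θ => Θ w v
      map_add' := fun _ _ => rfl
      map_smul' := fun _ _ => rfl }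
  have hev : ∀ Θ, ev Θ = Θ w v := fun _ => rfl
  have key : ∀ (Θ : W →ₗ⁅ℂ,L⁆ (V →ₗ[ℂ] L)) (χ), IsPosRoot H α χ → ∀ f ∈ wt H L (-χ), ∀ x,
      Θ w ⁅f, x⁆ = ⁅f, Θ w x⁆ := by
    intro Θ χ hχ f hf x
    have h1 : ⁅f, w⁆ = 0 := hw.2 (-χ) (isPosRoot_neg.2 (by rwa [neg_neg])) f hf
    have h2 : ⁅f, Θ w⁆ = 0 := by rw [← LieModuleHom.map_lie, h1, map_zero]
    have h3 := LinearMap.congr_fun h2 x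
    rw [LieHom.lie_apply, LinearMap.zero_apply] at h3
    exact (sub_eq_zero.1 h3).symm
  have hinj : Function.Injective ev := by
    rw [← LinearMap.ker_eq_bot, LinearMap.ker_eq_bot']
    intro Θ hΘ
    have hk : LinearMap.ker (Θ w) = ⊤ := by
      refine neg_span hb hv hg _ hΘ ?_
      intro χ hχ f hf x hx
      rw [LinearMap.mem_ker] at hx ⊢
      rw [key Θ χ hχ f hf, hx, lie_zero]
    have hk2 : Θ.ker = ⊤ := by
      apply hwg
      rw [LieModuleHom.mem_ker]
      exact LinearMap.ker_eq_top.1 hk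
    ext1 m
    have : m ∈ Θ.ker := by rw [hk2]; trivial
    exact this
  have hrange : LinearMap.range ev =
      (kerS α fun j => μ (hc j) = 0).map H.toSubmodule.subtype := by
    apply le_antisymm
    · rintro _ ⟨Θ, rfl⟩
      have hwt0 : Θ w v ∈ wt H L 0 := by
        intro h
        have h1 : ⁅(h : L), Θ w⁆ = (-μ) h • Θ w := by
          rw [← LieModuleHom.map_lie, hw.1 h, map_smul]
        have h3 := LinearMap.congr_fun h1 v
        rw [LieHom.lie_apply, LinearMap.smul_apply, hv.1 h, map_smul, LinearMap.neg_apply,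
          neg_smul] at h3
        rw [LinearMap.zero_apply, zero_smul]
        have h4 := congrArg (fun y => y + μ h • Θ w v) h3
        simpa using h4
      refine ⟨⟨Θ w v, mem_wt_zero.1 hwt0⟩, ?_, rfl⟩
      intro j hj
      obtain ⟨e, he, f, hf, hs⟩ := exists_sl2 (hco j)
      have P : hs.HasPrimitiveVectorWith v (μ (hc j)) :=
        ⟨hv0, hv.1 _, hv.2 _ (posRoot_simple hb j) e he⟩
      have h5 := P.pow_toEnd_f_eq_zero_of_eq_nat (n := 0) (by rw [hj, Nat.cast_zero])
      rw [zero_add, pow_one, toEnd_apply_apply] at h5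
      have h6 := key Θ _ (posRoot_simple hb j) f hf v
      rw [h5, map_zero] at h6
      have h7 := hf ⟨Θ w v, mem_wt_zero.1 hwt0⟩
      change ⁅Θ w v, f⁆ = _ at h7
      rw [← lie_skew, ← h6, neg_zero] at h7
      have h8 := (smul_eq_zero.1 h7.symm).resolve_right hs.f_ne_zero
      rw [LinearMap.neg_apply, neg_eq_zero] at h8
      exact h8
    · rintro _ ⟨h0, hh0, rfl⟩
      obtain ⟨ψ, hψ, hψ2⟩ := exists_psi hb hco hμ hv hv0 hg (lnil_of_fd hb v) h0 hh0
      obtain ⟨g, hg1, hg2⟩ := univ hb.neg (hc := fun j => - hc j) (fun j => (hco j).neg)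
        (psi_weight hb hv hg hψ hψ2) (lnil_of_fd hb.neg ψ) hw hw0 hwg (lnil_of_fd hb.neg w)
      refine ⟨{ g with map_lie' := fun {x m} => hg1 x m }, ?_⟩
      change g w v = h0
      rw [hg2, hψ]
  rw [← LinearMap.finrank_range_of_inj hinj, hrange]
  exact (Submodule.equivMapOfInjective _ (Submodule.injective_subtype _) _).finrank_eq.symm

end Main

end AdjPaper
namespace AdjPaper

/-- For a dominant integral weight `μ` of a semisimple Lie algebra `𝔤`,
the `𝔤`-invariant subspace of `adj(𝔤) ⊗ V_μ ⊗ V_μ̄` has dimension equal to the number of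
indices `j` with `⟨μ, α_j∨⟩ > 0`. Here `W`, carrying a perfect invariant pairing with
`V_μ`, plays the role of `V_μ̄ ≅ V_μ*`. -/
theorem adjoint_invariants_in_V_tensor_dual
    {L : Type} [LieRing L] [LieAlgebra ℂ L] [FiniteDimensional ℂ L]
    [LieAlgebra.IsSemisimple ℂ L]
    (H : LieSubalgebra ℂ L) [H.IsCartanSubalgebra]
    {r : ℕ} (α : Fin r → Module.Dual ℂ H) (hc : Fin r → H)
    (hbase : IsBase H α) (hcoroot : ∀ j, IsCoroot H (α j) (hc j))
    (μ : Module.Dual ℂ H) (hμ : IsDomInt hc μ)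
    (Vμ W : Type) [AddCommGroup Vμ] [Module ℂ Vμ] [LieRingModule L Vμ] [LieModule ℂ L Vμ]
    [FiniteDimensional ℂ Vμ]
    [AddCommGroup W] [Module ℂ W] [LieRingModule L W] [LieModule ℂ L W]
    [FiniteDimensional ℂ W]
    (hV : IsHWIrrep H α μ Vμ) (hW : IsDualPair (L := L) W Vμ) :
    Module.finrank ℂ (maxTrivSubmodule ℂ L (L ⊗[ℂ] (Vμ ⊗[ℂ] W))) =
      (Finset.univ.filter fun j => μ (hc j) ≠ 0).card := by
  obtain ⟨hs, v, hv0, hvw, hvs⟩ := hV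
  obtain ⟨B, hB1, hB2, hB⟩ := hW
  obtain ⟨h1, h2⟩ := pair_bij B hB1 hB2
  have hv : Sing α μ v := ⟨hvw, fun χ hχ e he => hvs χ hχ e (mem_rootSpace_iff.2 he)⟩
  have hg : Gen L v := by
    intro P hP
    refine (hs.eq_bot_or_eq_top P).resolve_left ?_
    intro h
    rw [h, LieSubmodule.mem_bot] at hP
    exact hv0 hP
  obtain ⟨w, hw0, hw, hwg⟩ := exists_lowest hbase hv hv0 hg hs B h1 h2 hB
  rw [finrank_inv B h1 h2 hB, finrank_hom hbase hcoroot hμ hv hv0 hg hw0 hw hwg,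
    finrank_kerS hbase]

end AdjPaper
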